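/- arXiv:2305.19046 — 2 statements merged into one kernel-verified Lean document; each statement's English description precedes it below -/
import Mathlib

section
/- There exist constants c, C > 0 depending on β, n and a cube Q₀ such that for every nonnegative function f and all t > 0, H^β_∞({x : M_{H^β_∞} f(x) > t}) ≤ C H^β_∞({x : M^{β,Q₀}_∞ f(x) > c t}), where M^{β,Q₀}_∞ is the dyadic Hausdorff content maximal function associated with the dyadic lattice generated by Q₀. -/
open scoped ENNReal
open Metric Set MeasureTheory

noncomputable section

/-- `ℝⁿ` as Euclidean space. -/
abbrev Rn (n : ℕ) := EuclideanSpace ℝ (Fin n)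

/-- The Choquet integral of a nonnegative function `g` with respect to a
(monotone) set function `C`: `∫ g dC := ∫_0^∞ C({g > t}) dt`. -/
noncomputable def choquet {X : Type*} (C : Set X → ℝ≥0∞) (g : X → ℝ≥0∞) : ℝ≥0∞ :=
  ∫⁻ t in Ioi (0 : ℝ), C {x | ENNReal.ofReal t < g x}

/-- The Choquet integral of `g` restricted to a set `A`. -/
noncomputable def choquetOn {X : Type*} (C : Set X → ℝ≥0∞) (A : Set X) (g : X → ℝ≥0∞) : ℝ≥0∞ :=
  ∫⁻ t in Ioi (0 : ℝ), C {x | x ∈ A ∧ ENNReal.ofReal t < g x}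

/-- The `L^∞(C)` norm: `inf {λ > 0 : C({|f| > λ}) = 0}` (formulated in `ℝ≥0∞`). -/
noncomputable def choquetEssSup {X : Type*} (C : Set X → ℝ≥0∞) (f : X → ℝ) : ℝ≥0∞ :=
  sInf {l : ℝ≥0∞ | C {x | l < ENNReal.ofReal |f x|} = 0}

/-- `C`-quasicontinuity of a function `f`. -/
def QuasiCont {X : Type*} [TopologicalSpace X] (C : Set X → ℝ≥0∞) (f : X → ℝ) : Prop :=
  ∀ ε : ℝ≥0∞, 0 < ε → ∃ U : Set X, IsOpen U ∧ C U < ε ∧ ContinuousOn f Uᶜ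

/-- Membership in the capacitary space `L^p(C)`: `C`-quasicontinuous with
finite `p`-th power Choquet integral. -/
def MemChoquetLp {X : Type*} [TopologicalSpace X] (C : Set X → ℝ≥0∞) (p : ℝ) (f : X → ℝ) : Prop :=
  QuasiCont C f ∧ choquet C (fun x => ENNReal.ofReal |f x| ^ p) < ∞

/-- The normalization constant `ω_β = π^{β/2}/Γ(β/2+1)`. -/
noncomputable def omegaC (β : ℝ) : ℝ≥0∞ :=
  ENNReal.ofReal (Real.pi ^ (β / 2) / Real.Gamma (β / 2 + 1))

/-- The `β`-dimensional Hausdorff content `H^β_∞`, defined via countable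
coverings by balls: `inf {∑ ω_β r_i^β : E ⊆ ⋃ B(x_i, r_i)}`. -/
noncomputable def hContent (n : ℕ) (β : ℝ) (E : Set (Rn n)) : ℝ≥0∞ :=
  ⨅ (c : ℕ → Rn n × ℝ) (_ : E ⊆ ⋃ i, ball (c i).1 (c i).2),
    ∑' i, omegaC β * ENNReal.ofReal ((c i).2 ^ β)

/-- The centered Hausdorff content maximal function
`M_{H^β_∞} g(x) := sup_{r>0} (1/(ω_β r^β)) ∫_{B(x,r)} g dH^β_∞`. -/
noncomputable def maximalH (n : ℕ) (β : ℝ) (g : Rn n → ℝ≥0∞) (x : Rn n) : ℝ≥0∞ :=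
  ⨆ (r : ℝ) (_ : 0 < r),
    (omegaC β * ENNReal.ofReal (r ^ β))⁻¹ * choquetOn (hContent n β) (ball x r) g

/-- A dyadic cube of generation `k` (side length `2^{-k} l`) at position `m`
in the dyadic lattice generated by the cube with corner `a` and side `l`. -/
def dyadicCube (n : ℕ) (a : Rn n) (l : ℝ) (k : ℤ) (m : Fin n → ℤ) : Set (Rn n) :=
  {x | ∀ i, a i + m i * ((2 : ℝ) ^ (-k) * l) ≤ x i ∧
        x i < a i + (m i + 1) * ((2 : ℝ) ^ (-k) * l)}

/-- The dyadic Hausdorff content `H^{β,Q₀}_∞` associated with the dyadic lattice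
generated by the cube `Q₀` with corner `a` and side length `l`:
`inf {∑ ℓ(Q_i)^β : E ⊆ ⋃ Q_i, Q_i ∈ D(Q₀)}`. -/
noncomputable def dContent (n : ℕ) (β : ℝ) (a : Rn n) (l : ℝ) (E : Set (Rn n)) : ℝ≥0∞ :=
  ⨅ (c : ℕ → ℤ × (Fin n → ℤ)) (_ : E ⊆ ⋃ i, dyadicCube n a l (c i).1 (c i).2),
    ∑' i, ENNReal.ofReal (((2 : ℝ) ^ (-(c i).1) * l) ^ β)

/-- The dyadic Hausdorff content maximal function
`M^{β,Q₀}_∞ g(x) := sup {(1/ℓ(Q)^β) ∫_Q g dH^{β,Q₀}_∞ : x ∈ Q ∈ D(Q₀)}`. -/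
noncomputable def dyadicMaximal (n : ℕ) (β : ℝ) (a : Rn n) (l : ℝ) (g : Rn n → ℝ≥0∞)
    (x : Rn n) : ℝ≥0∞ :=
  ⨆ (k : ℤ) (m : Fin n → ℤ) (_ : x ∈ dyadicCube n a l k m),
    (ENNReal.ofReal (((2 : ℝ) ^ (-k) * l) ^ β))⁻¹ *
      choquetOn (dContent n β a l) (dyadicCube n a l k m) g

/-!
A ball is covered by `3 ^ n` dyadic cubes of comparable side and a dyadic cube by a ball of
comparable radius, so the two contents are comparable. If the average of `f` over `ball x r` exceeds
`t`, then one of the `3 ^ n` dyadic cubes of side about `r` around `x` has an average exceeding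
`c * t`. That whole cube lies in the superlevel set `E` of the dyadic maximal function at `c * t`,
so `x` lies in the threefold dilate of a dyadic cube contained in `E`.

It remains to bound the content of the union of all these dilates. Given a dyadic covering of `E` of
finite cost, replace the covering by the maximal dyadic cubes contained in its union: they are
pairwise disjoint, and they cost no more than the covering because `ℓ(Q) ^ β` is at most the dyadic
content of `Q`. Each dilate is covered by the `3 ^ n` neighbors of a maximal cube.
-/

section Choquet

variable {X : Type*}

lemma choquetOn_le_mul {C D : Set X → ℝ≥0∞} {K : ℝ≥0∞} (hK : K ≠ ∞) (hCD : ∀ E, C E ≤ K * D E)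
    (A : Set X) (f : X → ℝ≥0∞) : choquetOn C A f ≤ K * choquetOn D A f := by
  rw [choquetOn, choquetOn, ← lintegral_const_mul' _ _ hK]
  exact lintegral_mono fun t => hCD _

lemma choquetOn_le_tsum {ι : Type*} [Countable ι] {C : Set X → ℝ≥0∞} (hmono : Monotone C)
    (hsub : ∀ A : ι → Set X, C (⋃ i, A i) ≤ ∑' i, C (A i)) {B : Set X} {A : ι → Set X}
    (hB : B ⊆ ⋃ i, A i) (f : X → ℝ≥0∞) : choquetOn C B f ≤ ∑' i, choquetOn C (A i) f := by
  have hmeas (i : ι) : Measurable fun t : ℝ => C {x | x ∈ A i ∧ ENNReal.ofReal t < f x} :=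
    Antitone.measurable fun s t hst => hmono fun x hx =>
      ⟨hx.1, (ENNReal.ofReal_le_ofReal hst).trans_lt hx.2⟩
  simp only [choquetOn]
  rw [← lintegral_tsum fun i => (hmeas i).aemeasurable]
  refine lintegral_mono fun t => (hmono ?_).trans (hsub _)
  rintro x ⟨hx, ht⟩
  obtain ⟨i, hi⟩ := mem_iUnion.1 (hB hx)
  exact mem_iUnion.2 ⟨i, hi, ht⟩

end Choquet

section NeighborIndices

variable {n : ℕ} {m m' : Fin n → ℤ}

/-- The `3 ^ n` positions of the cubes of a given generation that are equal or adjacent (possibly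
only through a corner) to the cube at position `m`. -/
def neighborIndices (m : Fin n → ℤ) : Finset (Fin n → ℤ) := Finset.Icc (m - 1) (m + 1)

lemma card_neighborIndices (m : Fin n → ℤ) : (neighborIndices m).card = 3 ^ n := by
  have hthree (i : Fin n) : m i + 1 + 1 - (m i - 1) = 3 := by ring
  simp [neighborIndices, Pi.card_Icc, hthree]

lemma mem_neighborIndices : m' ∈ neighborIndices m ↔ ∀ i, m i - 1 ≤ m' i ∧ m' i ≤ m i + 1 := by
  simp [neighborIndices, Pi.le_def, forall_and]

lemma mem_neighborIndices_comm : m' ∈ neighborIndices m ↔ m ∈ neighborIndices m' := by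
  simp only [mem_neighborIndices]
  exact forall_congr' fun i => by lia

lemma ediv_mem_neighborIndices (h : m' ∈ neighborIndices m) {N : ℤ} (hN : 0 < N) :
    (fun i => m' i / N) ∈ neighborIndices fun i => m i / N := by
  rw [mem_neighborIndices] at h ⊢
  intro i
  have htranslate (j : ℤ) : (m i + j * N) / N = m i / N + j := Int.add_mul_ediv_right _ _ hN.ne'
  rw [sub_eq_add_neg, ← htranslate, ← htranslate]
  exact ⟨Int.ediv_le_ediv hN (by linarith [(h i).1]), Int.ediv_le_ediv hN (by linarith [(h i).2])⟩

end NeighborIndices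

section DyadicCubes

variable {n : ℕ} {a : Rn n} {l : ℝ} {k k' : ℤ} {m m' : Fin n → ℤ} {x y : Rn n}

/-- The side length of the cubes of generation `k` in the lattice generated by a cube of side
length `l`. -/
def dyadicSide (l : ℝ) (k : ℤ) : ℝ := (2 : ℝ) ^ (-k) * l

lemma dyadicSide_pos (hl : 0 < l) (k : ℤ) : 0 < dyadicSide l k := by
  unfold dyadicSide
  positivity

lemma dyadicSide_eq_two_pow_mul (l : ℝ) (k : ℤ) (d : ℕ) :
    dyadicSide l k = (2 ^ d : ℕ) * dyadicSide l (k + d) := by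
  have hexp : -k = d + -(k + d) := by ring
  rw [dyadicSide, dyadicSide, ← mul_assoc, hexp, zpow_add₀ two_ne_zero]
  simp

lemma exists_dyadicSide_mem_Icc (hl : 0 < l) {r : ℝ} (hr : 0 < r) :
    ∃ k, dyadicSide l k ∈ Icc r (2 * r) := by
  obtain ⟨j, hj, hj'⟩ := exists_mem_Ioc_zpow (div_pos hr hl) one_lt_two
  rw [lt_div_iff₀ hl] at hj
  rw [div_le_iff₀ hl] at hj'
  refine ⟨-(j + 1), by rwa [dyadicSide, neg_neg], ?_⟩
  rw [dyadicSide, neg_neg, zpow_add_one₀ two_ne_zero]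
  linarith

/-- The position of the cube of generation `k` that contains `x`. -/
def dyadicIndex (a : Rn n) (l : ℝ) (k : ℤ) (x : Rn n) : Fin n → ℤ :=
  fun i => ⌊(x i - a i) / dyadicSide l k⌋

lemma mem_dyadicCube_iff (hl : 0 < l) : x ∈ dyadicCube n a l k m ↔ dyadicIndex a l k x = m := by
  have hs := dyadicSide_pos hl k
  refine Iff.trans (forall_congr' fun i => ?_) funext_iff.symm
  rw [dyadicIndex, Int.floor_eq_iff, le_div_iff₀ hs, div_lt_iff₀ hs, le_sub_iff_add_le',
    sub_lt_iff_lt_add']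
  rfl

lemma dyadicCube_nonempty (hl : 0 < l) (k : ℤ) (m : Fin n → ℤ) :
    (dyadicCube n a l k m).Nonempty := by
  refine ⟨WithLp.toLp 2 fun i => a i + m i * dyadicSide l k, fun i => ⟨le_rfl, ?_⟩⟩
  exact add_lt_add_right (mul_lt_mul_of_pos_right (lt_add_one _) (dyadicSide_pos hl k)) _

lemma dyadicIndex_eq_ediv (a : Rn n) (l : ℝ) (k : ℤ) (d : ℕ) (x : Rn n) :
    dyadicIndex a l k x = fun i => dyadicIndex a l (k + d) x i / (2 ^ d : ℕ) := by
  ext i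
  rw [dyadicIndex, dyadicIndex, ← Int.floor_div_natCast, div_div, dyadicSide_eq_two_pow_mul l k d,
    mul_comm]

lemma dyadicIndex_congr_of_le (hk : k' ≤ k) (h : dyadicIndex a l k x = dyadicIndex a l k y) :
    dyadicIndex a l k' x = dyadicIndex a l k' y := by
  obtain ⟨d, rfl⟩ := Int.le.dest hk
  rw [dyadicIndex_eq_ediv a l k' d x, dyadicIndex_eq_ediv a l k' d y, h]

lemma dyadicIndex_mem_neighborIndices_of_le (hk : k' ≤ k)
    (h : dyadicIndex a l k x ∈ neighborIndices (dyadicIndex a l k y)) :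
    dyadicIndex a l k' x ∈ neighborIndices (dyadicIndex a l k' y) := by
  obtain ⟨d, rfl⟩ := Int.le.dest hk
  rw [dyadicIndex_eq_ediv a l k' d x, dyadicIndex_eq_ediv a l k' d y]
  exact ediv_mem_neighborIndices h (by positivity)

lemma dyadicCube_subset_of_le (hl : 0 < l) (hk : k' ≤ k) (hx : x ∈ dyadicCube n a l k m)
    (hx' : x ∈ dyadicCube n a l k' m') : dyadicCube n a l k m ⊆ dyadicCube n a l k' m' := by
  intro y hy
  rw [mem_dyadicCube_iff hl] at hx hx' hy ⊢
  rw [← hx']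
  exact dyadicIndex_congr_of_le hk (hy.trans hx.symm)

lemma abs_sub_lt_dyadicSide (hx : x ∈ dyadicCube n a l k m) (hy : y ∈ dyadicCube n a l k m)
    (i : Fin n) : |x i - y i| < dyadicSide l k := by
  have hxi := hx i
  have hyi := hy i
  rw [dyadicSide, abs_sub_lt_iff]
  constructor <;> linarith

lemma dyadicCube_subset_ball (hl : 0 < l) (hy : y ∈ dyadicCube n a l k m) :
    dyadicCube n a l k m ⊆ ball y ((n + 1) * dyadicSide l k) := by
  intro x hx
  have hs := dyadicSide_pos hl k
  rw [mem_ball, EuclideanSpace.dist_eq, Real.sqrt_lt' (by positivity)]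
  calc ∑ i, dist (x i) (y i) ^ 2 ≤ ∑ _i : Fin n, dyadicSide l k ^ 2 := by
        gcongr with i
        exact (abs_sub_lt_dyadicSide hx hy i).le
    _ = n * dyadicSide l k ^ 2 := by simp
    _ < (n + 1) ^ 2 * dyadicSide l k ^ 2 := by
        gcongr
        nlinarith [(Nat.cast_nonneg n : (0 : ℝ) ≤ n)]
    _ = ((n + 1) * dyadicSide l k) ^ 2 := (mul_pow _ _ _).symm

lemma ball_subset_iUnion_dyadicCube (hl : 0 < l) (x : Rn n) {r : ℝ} (hr : r ≤ dyadicSide l k) :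
    ball x r ⊆ ⋃ m : neighborIndices (dyadicIndex a l k x), dyadicCube n a l k m := by
  intro y hy
  refine mem_iUnion.2 ⟨⟨dyadicIndex a l k y, mem_neighborIndices.2 fun i => ?_⟩,
    (mem_dyadicCube_iff hl).2 rfl⟩
  have hs := dyadicSide_pos hl k
  have hyx : |y i - x i| ≤ dyadicSide l k :=
    (PiLp.dist_apply_le y x i).trans ((mem_ball.1 hy).le.trans hr)
  have hshift : |(y i - a i) / dyadicSide l k - (x i - a i) / dyadicSide l k| ≤ 1 := by
    rwa [← sub_div, sub_sub_sub_cancel_right, abs_div, abs_of_pos hs, div_le_one hs]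
  obtain ⟨hlow, hupp⟩ := abs_sub_le_iff.1 hshift
  constructor
  · rw [dyadicIndex, dyadicIndex, ← Int.floor_sub_one]
    exact Int.floor_mono (by linarith)
  · rw [dyadicIndex, dyadicIndex, ← Int.floor_add_one]
    exact Int.floor_mono (by linarith)

lemma volume_dyadicCube (k : ℤ) (m : Fin n → ℤ) :
    volume (dyadicCube n a l k m) = ENNReal.ofReal (dyadicSide l k) ^ n := by
  have hbox : dyadicCube n a l k m = (MeasurableEquiv.toLp 2 (Fin n → ℝ)).symm ⁻¹'
      univ.pi fun i => Ico (a i + m i * dyadicSide l k) (a i + (m i + 1) * dyadicSide l k) := by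
    ext x
    simp [dyadicCube, dyadicSide]
  rw [hbox, (EuclideanSpace.volume_preserving_symm_measurableEquiv_toLp (Fin n)).measure_preimage
    (MeasurableSet.univ_pi fun i => measurableSet_Ico).nullMeasurableSet, Real.volume_pi_Ico]
  simp [add_mul]

end DyadicCubes

section DyadicContent

variable {n : ℕ} {β : ℝ} {a : Rn n} {l : ℝ}

lemma dContent_mono : Monotone (dContent n β a l) :=
  fun _ _ hAB => le_iInf₂ fun c hc => iInf₂_le c (hAB.trans hc)

lemma dContent_eq_iInf_dyadicSide (E : Set (Rn n)) :
    dContent n β a l E = ⨅ (c : ℕ → ℤ × (Fin n → ℤ))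
      (_ : E ⊆ ⋃ i, dyadicCube n a l (c i).1 (c i).2),
        ∑' i, ENNReal.ofReal (dyadicSide l (c i).1 ^ β) := rfl

lemma exists_rpow_dyadicSide_le (hβ : 0 < β) (l : ℝ) {δ : ℝ≥0∞} (hδ : 0 < δ) :
    ∃ k, ENNReal.ofReal (dyadicSide l k ^ β) ≤ δ := by
  have hlim : Filter.Tendsto (fun d : ℕ => ENNReal.ofReal (dyadicSide l d ^ β)) Filter.atTop
      (nhds 0) := by
    have hside : Filter.Tendsto (fun d : ℕ => dyadicSide l d) Filter.atTop (nhds 0) := by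
      have hpow := tendsto_pow_atTop_nhds_zero_of_lt_one (r := (2 : ℝ)⁻¹) (by norm_num)
        (by norm_num)
      simpa [dyadicSide] using hpow.mul_const l
    simpa [Real.zero_rpow hβ.ne'] using
      ENNReal.tendsto_ofReal (hside.rpow_const (p := β) (.inr hβ.le))
  obtain ⟨d, hd⟩ := (hlim.eventually_le_const hδ).exists
  exact ⟨d, hd⟩

-- Coverings in `dContent` are sequences of nonempty cubes, so a family `ι` that may be finite is
-- padded by a sequence of cubes of arbitrarily small total size.
lemma dContent_le_tsum (hβ : 0 < β) {ι : Type*} [Countable ι] (k : ι → ℤ)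
    (m : ι → Fin n → ℤ) {E : Set (Rn n)} (hE : E ⊆ ⋃ i, dyadicCube n a l (k i) (m i)) :
    dContent n β a l E ≤ ∑' i, ENNReal.ofReal (dyadicSide l (k i) ^ β) := by
  refine le_of_forall_pos_le_add fun ε hε => ?_
  obtain ⟨δ, hδ, hδε⟩ := ENNReal.exists_pos_sum_of_countable' hε.ne' ℕ
  choose p hp using fun j => exists_rpow_dyadicSide_le hβ l (hδ j)
  obtain ⟨e⟩ : Nonempty (ℕ ≃ ι ⊕ ℕ) := nonempty_equiv_of_countable
  let q : ι ⊕ ℕ → ℤ × (Fin n → ℤ) := Sum.elim (fun i => (k i, m i)) fun j => (p j, 0)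
  have hcover : E ⊆ ⋃ j, dyadicCube n a l (q (e j)).1 (q (e j)).2 := by
    rw [e.surjective.iUnion_comp fun s => dyadicCube n a l (q s).1 (q s).2, iUnion_sum]
    exact hE.trans subset_union_left
  calc dContent n β a l E ≤ ∑' j, ENNReal.ofReal (dyadicSide l (q (e j)).1 ^ β) :=
        iInf₂_le (fun j => q (e j)) hcover
    _ = ∑' s, ENNReal.ofReal (dyadicSide l (q s).1 ^ β) :=
        e.tsum_eq fun s => ENNReal.ofReal (dyadicSide l (q s).1 ^ β)
    _ = ∑' i, ENNReal.ofReal (dyadicSide l (k i) ^ β) +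
          ∑' j, ENNReal.ofReal (dyadicSide l (p j) ^ β) :=
        ENNReal.summable.tsum_sum ENNReal.summable
    _ ≤ ∑' i, ENNReal.ofReal (dyadicSide l (k i) ^ β) + ε := by
        gcongr
        exact (ENNReal.tsum_le_tsum hp).trans hδε.le

lemma dContent_empty (hβ : 0 < β) : dContent n β a l ∅ = 0 := by
  simpa using dContent_le_tsum (a := a) (l := l) hβ Empty.elim (fun i => i.elim) (empty_subset _)

lemma dContent_iUnion_le (hβ : 0 < β) {ι : Type*} [Countable ι]
    (A : ι → Set (Rn n)) : dContent n β a l (⋃ i, A i) ≤ ∑' i, dContent n β a l (A i) := by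
  refine ENNReal.le_of_forall_pos_le_add fun ε hε hfin => ?_
  obtain ⟨δ, hδ, hδε⟩ := ENNReal.exists_pos_sum_of_countable' (ENNReal.coe_pos.2 hε).ne' ι
  have hnear (i : ι) : ∃ c : ℕ → ℤ × (Fin n → ℤ), A i ⊆ ⋃ j, dyadicCube n a l (c j).1 (c j).2 ∧
      ∑' j, ENNReal.ofReal (dyadicSide l (c j).1 ^ β) < dContent n β a l (A i) + δ i := by
    have hlt := ENNReal.lt_add_right (ENNReal.ne_top_of_tsum_ne_top hfin.ne i) (hδ i).ne'
    simpa only [dContent_eq_iInf_dyadicSide, iInf_lt_iff, exists_prop] using hlt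
  choose c hc hcδ using hnear
  have hcover : ⋃ i, A i ⊆ ⋃ s : ι × ℕ, dyadicCube n a l (c s.1 s.2).1 (c s.1 s.2).2 := by
    rw [iUnion_prod']
    exact iUnion_mono hc
  calc dContent n β a l (⋃ i, A i)
      ≤ ∑' s : ι × ℕ, ENNReal.ofReal (dyadicSide l (c s.1 s.2).1 ^ β) :=
        dContent_le_tsum hβ _ _ hcover
    _ = ∑' i, ∑' j, ENNReal.ofReal (dyadicSide l (c i j).1 ^ β) :=
        ENNReal.tsum_prod (f := fun i j => ENNReal.ofReal (dyadicSide l (c i j).1 ^ β))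
    _ ≤ ∑' i, (dContent n β a l (A i) + δ i) := ENNReal.tsum_le_tsum fun i => (hcδ i).le
    _ = ∑' i, dContent n β a l (A i) + ∑' i, δ i := ENNReal.tsum_add
    _ ≤ ∑' i, dContent n β a l (A i) + ε := by gcongr

lemma dContent_iUnion_neighborIndices_le (hβ : 0 < β) (k : ℤ) (m : Fin n → ℤ) :
    dContent n β a l (⋃ m' : neighborIndices m, dyadicCube n a l k m') ≤
      3 ^ n * ENNReal.ofReal (dyadicSide l k ^ β) := by
  refine (dContent_le_tsum hβ (fun _ : neighborIndices m => k) Subtype.val subset_rfl).trans_eq ?_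
  simp [tsum_fintype, card_neighborIndices]

-- When all covering cubes are smaller than the covered one, compare volumes, writing
-- `s ^ n = s ^ β * s ^ (n - β)`.
lemma rpow_dyadicSide_le_dContent (hβ0 : 0 ≤ β) (hβn : β ≤ n) (hl : 0 < l) (k : ℤ)
    (m : Fin n → ℤ) :
    ENNReal.ofReal (dyadicSide l k ^ β) ≤ dContent n β a l (dyadicCube n a l k m) := by
  rw [dContent_eq_iInf_dyadicSide]
  refine le_iInf₂ fun c hc => ?_
  have hs := dyadicSide_pos hl k
  by_cases! hbig : ∃ i, dyadicSide l k ≤ dyadicSide l (c i).1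
  · obtain ⟨i, hi⟩ := hbig
    refine le_trans ?_ (ENNReal.le_tsum i)
    gcongr
  have hsplit (u : ℝ) (hu : 0 < u) :
      ENNReal.ofReal u ^ n = ENNReal.ofReal (u ^ β) * ENNReal.ofReal (u ^ (n - β)) := by
    rw [← ENNReal.ofReal_mul (by positivity), ← Real.rpow_add hu, add_sub_cancel,
      Real.rpow_natCast, ENNReal.ofReal_pow hu.le]
  have hpos : ENNReal.ofReal (dyadicSide l k ^ (n - β)) ≠ 0 :=
    (ENNReal.ofReal_pos.2 (by positivity)).ne'
  rw [← ENNReal.mul_le_mul_iff_left hpos ENNReal.ofReal_ne_top, ← hsplit _ hs,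
    ← volume_dyadicCube (a := a) k m, ← ENNReal.tsum_mul_right]
  refine (measure_mono hc).trans ((measure_iUnion_le _).trans (ENNReal.tsum_le_tsum fun i => ?_))
  rw [volume_dyadicCube, hsplit _ (dyadicSide_pos hl _)]
  have hsmall := (hbig i).le
  have hside := (dyadicSide_pos hl (c i).1).le
  have : 0 ≤ n - β := sub_nonneg.2 hβn
  gcongr

lemma exists_le_generation_of_dContent_ne_top (hβ0 : 0 < β) (hβn : β ≤ n) (hl : 0 < l)
    {U : Set (Rn n)} (hU : dContent n β a l U ≠ ∞) :
    ∃ N : ℤ, ∀ k m, dyadicCube n a l k m ⊆ U → N ≤ k := by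
  obtain ⟨d, hd⟩ := pow_unbounded_of_one_lt ((dContent n β a l U).toReal ^ β⁻¹ / l) one_lt_two
  rw [div_lt_iff₀ hl] at hd
  refine ⟨-d, fun k m hkm => ?_⟩
  have hside := (rpow_dyadicSide_le_dContent hβ0.le hβn hl k m).trans (dContent_mono hkm)
  rw [ENNReal.ofReal_le_iff_le_toReal hU, ← Real.le_rpow_inv_iff_of_pos (dyadicSide_pos hl k).le
    ENNReal.toReal_nonneg hβ0] at hside
  have hpow : (2 : ℝ) ^ (-k) < 2 ^ d := lt_of_mul_lt_mul_right (hside.trans_lt hd) hl.le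
  rw [← zpow_natCast, zpow_lt_zpow_iff_right₀ one_lt_two] at hpow
  lia

end DyadicContent

section MaximalCubes

variable {n : ℕ} {β : ℝ} {a : Rn n} {l : ℝ} {U : Set (Rn n)} {q q' : ℤ × (Fin n → ℤ)}

/-- The maximal dyadic cubes contained in `U`, encoded by generation and position; maximality says
that no cube of a smaller generation contains the given one and is contained in `U`. -/
def maximalCubes (n : ℕ) (a : Rn n) (l : ℝ) (U : Set (Rn n)) : Set (ℤ × (Fin n → ℤ)) :=
  {q | dyadicCube n a l q.1 q.2 ⊆ U ∧ ∀ k m, dyadicCube n a l k m ⊆ U →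
    dyadicCube n a l q.1 q.2 ⊆ dyadicCube n a l k m → q.1 ≤ k}

lemma exists_mem_maximalCubes (hU : ∃ N : ℤ, ∀ k m, dyadicCube n a l k m ⊆ U → N ≤ k)
    {k : ℤ} {m : Fin n → ℤ} (hkm : dyadicCube n a l k m ⊆ U) :
    ∃ q ∈ maximalCubes n a l U, q.1 ≤ k ∧ dyadicCube n a l k m ⊆ dyadicCube n a l q.1 q.2 := by
  obtain ⟨N, hN⟩ := hU
  obtain ⟨z, ⟨p, hpU, hp⟩, hmin⟩ := Int.exists_least_of_bdd
    (P := fun z => ∃ p, dyadicCube n a l z p ⊆ U ∧ dyadicCube n a l k m ⊆ dyadicCube n a l z p)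
    ⟨N, fun z ⟨p, hpU, _⟩ => hN z p hpU⟩ ⟨k, m, hkm, subset_rfl⟩
  exact ⟨(z, p), ⟨hpU, fun z' p' hU' hsub => hmin z' ⟨p', hU', hp.trans hsub⟩⟩,
    hmin k ⟨m, hkm, subset_rfl⟩, hp⟩

lemma dyadicCube_subset_of_mem_maximalCubes (hl : 0 < l) (hq : q ∈ maximalCubes n a l U)
    {k : ℤ} {m : Fin n → ℤ} (hkm : dyadicCube n a l k m ⊆ U)
    (hmeet : (dyadicCube n a l k m ∩ dyadicCube n a l q.1 q.2).Nonempty) :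
    q.1 ≤ k ∧ dyadicCube n a l k m ⊆ dyadicCube n a l q.1 q.2 := by
  obtain ⟨x, hx, hxq⟩ := hmeet
  have hle : q.1 ≤ k := by
    by_contra! hlt
    exact hlt.not_ge (hq.2 k m hkm (dyadicCube_subset_of_le hl hlt.le hxq hx))
  exact ⟨hle, dyadicCube_subset_of_le hl hle hx hxq⟩

lemma eq_of_mem_maximalCubes (hl : 0 < l) (hq : q ∈ maximalCubes n a l U)
    (hq' : q' ∈ maximalCubes n a l U)
    (hmeet : (dyadicCube n a l q.1 q.2 ∩ dyadicCube n a l q'.1 q'.2).Nonempty) : q = q' := by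
  have hgen : q.1 = q'.1 := le_antisymm
    (dyadicCube_subset_of_mem_maximalCubes hl hq hq'.1 (inter_comm _ _ ▸ hmeet)).1
    (dyadicCube_subset_of_mem_maximalCubes hl hq' hq.1 hmeet).1
  obtain ⟨x, hx, hx'⟩ := hmeet
  rw [mem_dyadicCube_iff hl] at hx hx'
  exact Prod.ext hgen (hx.symm.trans (hgen ▸ hx'))

lemma tsum_maximalCubes_le (hβ0 : 0 < β) (hβn : β ≤ n) (hl : 0 < l) {ι : Type*} [Countable ι]
    (k : ι → ℤ) (m : ι → Fin n → ℤ) :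
    ∑' q : maximalCubes n a l (⋃ i, dyadicCube n a l (k i) (m i)),
        ENNReal.ofReal (dyadicSide l q.1.1 ^ β) ≤
      ∑' i, ENNReal.ofReal (dyadicSide l (k i) ^ β) := by
  set U := ⋃ i, dyadicCube n a l (k i) (m i)
  let inside (q : maximalCubes n a l U) : Set ι :=
    {i | (dyadicCube n a l (k i) (m i) ∩ dyadicCube n a l q.1.1 q.1.2).Nonempty}
  have hsubset (q : maximalCubes n a l U) (i : ι) (hi : i ∈ inside q) :
      dyadicCube n a l (k i) (m i) ⊆ dyadicCube n a l q.1.1 q.1.2 :=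
    (dyadicCube_subset_of_mem_maximalCubes hl q.2
      (subset_iUnion (fun i => dyadicCube n a l (k i) (m i)) i) hi).2
  have hdisjoint : univ.PairwiseDisjoint inside := by
    intro q _ q' _ hne
    refine Set.disjoint_left.2 fun i hi hi' => hne (Subtype.ext ?_)
    obtain ⟨x, hx⟩ := dyadicCube_nonempty (a := a) hl (k i) (m i)
    exact eq_of_mem_maximalCubes hl q.2 q'.2 ⟨x, hsubset q i hi hx, hsubset q' i hi' hx⟩
  have hcover (q : maximalCubes n a l U) :
      dyadicCube n a l q.1.1 q.1.2 ⊆ ⋃ i : inside q, dyadicCube n a l (k i) (m i) := by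
    intro x hx
    obtain ⟨i, hi⟩ := mem_iUnion.1 (q.2.1 hx)
    exact mem_iUnion.2 ⟨⟨i, x, hi, hx⟩, hi⟩
  calc ∑' q : maximalCubes n a l U, ENNReal.ofReal (dyadicSide l q.1.1 ^ β)
      ≤ ∑' q, ∑' i : inside q, ENNReal.ofReal (dyadicSide l (k i) ^ β) :=
        ENNReal.tsum_le_tsum fun q =>
          (rpow_dyadicSide_le_dContent hβ0.le hβn hl _ _).trans
            (dContent_le_tsum hβ0 _ _ (hcover q))
    _ = ∑' i : ⋃ q, inside q, ENNReal.ofReal (dyadicSide l (k i) ^ β) :=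
        (ENNReal.tsum_biUnion (f := fun i => ENNReal.ofReal (dyadicSide l (k i) ^ β))
          hdisjoint).symm
    _ ≤ ∑' i, ENNReal.ofReal (dyadicSide l (k i) ^ β) :=
        ENNReal.tsum_comp_le_tsum_of_injective Subtype.val_injective _

end MaximalCubes

section DyadicDilation

variable {n : ℕ} {β : ℝ} {a : Rn n} {l : ℝ}

/-- The union of the concentric threefold dilates of the dyadic cubes contained in `E`. Up to
boundary points, the dilate of a cube is the union of its neighbors of the same generation. -/
def dyadicDilation (n : ℕ) (a : Rn n) (l : ℝ) (E : Set (Rn n)) : Set (Rn n) :=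
  {x | ∃ k m, dyadicCube n a l k m ⊆ E ∧ dyadicIndex a l k x ∈ neighborIndices m}

lemma dyadicDilation_mono : Monotone (dyadicDilation n a l) :=
  fun _ _ hEF _ ⟨k, m, hsub, hx⟩ => ⟨k, m, hsub.trans hEF, hx⟩

lemma dyadicDilation_subset_iUnion_maximalCubes (hl : 0 < l) {U : Set (Rn n)}
    (hU : ∃ N : ℤ, ∀ k m, dyadicCube n a l k m ⊆ U → N ≤ k) :
    dyadicDilation n a l U ⊆ ⋃ q : maximalCubes n a l U,
      ⋃ m : neighborIndices q.1.2, dyadicCube n a l q.1.1 m := by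
  rintro x ⟨k, m, hsub, hx⟩
  obtain ⟨q, hq, hqk, hmq⟩ := exists_mem_maximalCubes hU hsub
  obtain ⟨y, hy⟩ := dyadicCube_nonempty (a := a) hl k m
  have hxq : dyadicIndex a l q.1 x ∈ neighborIndices q.2 := by
    rw [← (mem_dyadicCube_iff hl).1 (hmq hy)]
    refine dyadicIndex_mem_neighborIndices_of_le hqk ?_
    rwa [(mem_dyadicCube_iff hl).1 hy]
  exact mem_iUnion₂.2 ⟨⟨q, hq⟩, ⟨_, hxq⟩, (mem_dyadicCube_iff hl).2 rfl⟩

theorem dContent_dyadicDilation_le (hβ0 : 0 < β) (hβn : β ≤ n) (hl : 0 < l) (E : Set (Rn n)) :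
    dContent n β a l (dyadicDilation n a l E) ≤ 3 ^ n * dContent n β a l E := by
  have hpow0 : (3 : ℝ≥0∞) ^ n ≠ 0 := by positivity
  have hpow : (3 : ℝ≥0∞) ^ n ≠ ∞ := by finiteness
  rw [dContent_eq_iInf_dyadicSide E]
  simp only [ENNReal.mul_iInf_of_ne hpow0 hpow]
  refine le_iInf₂ fun c hc => ?_
  set U := ⋃ i, dyadicCube n a l (c i).1 (c i).2
  by_cases hfin : ∑' i, ENNReal.ofReal (dyadicSide l (c i).1 ^ β) = ∞
  · simp [hfin]
  have hU : dContent n β a l U ≠ ∞ :=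
    ne_top_of_le_ne_top hfin (dContent_le_tsum hβ0 _ _ subset_rfl)
  have hcover := (dyadicDilation_mono hc).trans (dyadicDilation_subset_iUnion_maximalCubes hl
    (exists_le_generation_of_dContent_ne_top hβ0 hβn hl hU))
  calc dContent n β a l (dyadicDilation n a l E)
      ≤ ∑' q : maximalCubes n a l U,
          dContent n β a l (⋃ m : neighborIndices q.1.2, dyadicCube n a l q.1.1 m) :=
        (dContent_mono hcover).trans (dContent_iUnion_le hβ0 _)
    _ ≤ ∑' q : maximalCubes n a l U, 3 ^ n * ENNReal.ofReal (dyadicSide l q.1.1 ^ β) :=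
        ENNReal.tsum_le_tsum fun q => dContent_iUnion_neighborIndices_le hβ0 _ _
    _ = 3 ^ n * ∑' q : maximalCubes n a l U, ENNReal.ofReal (dyadicSide l q.1.1 ^ β) :=
        ENNReal.tsum_mul_left
    _ ≤ 3 ^ n * ∑' i, ENNReal.ofReal (dyadicSide l (c i).1 ^ β) := by
        gcongr
        exact tsum_maximalCubes_le hβ0 hβn hl _ _

end DyadicDilation

section ContentComparison

variable {n : ℕ} {β : ℝ} {a : Rn n} {l : ℝ}

lemma omegaC_pos (hβ : 0 ≤ β) : 0 < omegaC β :=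
  ENNReal.ofReal_pos.2 (div_pos (by positivity) (Real.Gamma_pos_of_pos (by positivity)))

lemma omegaC_ne_top (β : ℝ) : omegaC β ≠ ∞ := ENNReal.ofReal_ne_top

lemma hContent_mono : Monotone (hContent n β) :=
  fun _ _ hAB => le_iInf₂ fun c hc => iInf₂_le c (hAB.trans hc)

lemma hContent_le_mul_dContent (hβ : 0 ≤ β) (hl : 0 < l) (E : Set (Rn n)) :
    hContent n β E ≤ omegaC β * ENNReal.ofReal ((n + 1) ^ β) * dContent n β a l E := by
  have hK0 : omegaC β * ENNReal.ofReal ((n + 1) ^ β) ≠ 0 :=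
    mul_ne_zero (omegaC_pos hβ).ne' (ENNReal.ofReal_pos.2 (by positivity)).ne'
  have hK : omegaC β * ENNReal.ofReal ((n + 1) ^ β) ≠ ∞ :=
    ENNReal.mul_ne_top (omegaC_ne_top β) ENNReal.ofReal_ne_top
  rw [dContent_eq_iInf_dyadicSide]
  simp only [ENNReal.mul_iInf_of_ne hK0 hK]
  refine le_iInf₂ fun c hc => ?_
  choose y hy using fun i => dyadicCube_nonempty (a := a) hl (c i).1 (c i).2
  have hcover := hc.trans (iUnion_mono fun i => dyadicCube_subset_ball hl (hy i))
  refine (iInf₂_le (fun i => (y i, (n + 1) * dyadicSide l (c i).1)) hcover).trans_eq ?_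
  rw [← ENNReal.tsum_mul_left]
  refine tsum_congr fun i => ?_
  rw [Real.mul_rpow (by positivity) (dyadicSide_pos hl _).le, ENNReal.ofReal_mul (by positivity),
    mul_assoc]

lemma dContent_ball_le (hβ : 0 < β) (hl : 0 < l) (x : Rn n) (r : ℝ) :
    dContent n β a l (ball x r) ≤ 3 ^ n * ENNReal.ofReal (2 ^ β) * ENNReal.ofReal (r ^ β) := by
  rcases le_or_gt r 0 with hr | hr
  · simp [ball_eq_empty.2 hr, dContent_empty hβ]
  obtain ⟨k, hrk, hkr⟩ := exists_dyadicSide_mem_Icc hl hr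
  have hs := (dyadicSide_pos hl k).le
  calc dContent n β a l (ball x r) ≤ 3 ^ n * ENNReal.ofReal (dyadicSide l k ^ β) :=
        (dContent_mono (ball_subset_iUnion_dyadicCube hl x hrk)).trans
          (dContent_iUnion_neighborIndices_le hβ k _)
    _ ≤ 3 ^ n * ENNReal.ofReal ((2 * r) ^ β) := by gcongr
    _ = 3 ^ n * ENNReal.ofReal (2 ^ β) * ENNReal.ofReal (r ^ β) := by
        rw [Real.mul_rpow two_pos.le hr.le, ENNReal.ofReal_mul (by positivity), mul_assoc]

lemma omegaC_mul_dContent_le (hβ : 0 < β) (hl : 0 < l) (E : Set (Rn n)) :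
    omegaC β * dContent n β a l E ≤ 3 ^ n * ENNReal.ofReal (2 ^ β) * hContent n β E := by
  have hK0 : 3 ^ n * ENNReal.ofReal (2 ^ β) ≠ 0 :=
    mul_ne_zero (by positivity) (ENNReal.ofReal_pos.2 (by positivity)).ne'
  have hK : 3 ^ n * ENNReal.ofReal (2 ^ β) ≠ ∞ := by finiteness
  rw [hContent]
  simp only [ENNReal.mul_iInf_of_ne hK0 hK]
  refine le_iInf₂ fun c hc => ?_
  calc omegaC β * dContent n β a l E
      ≤ omegaC β * ∑' i, dContent n β a l (ball (c i).1 (c i).2) := by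
        gcongr
        exact (dContent_mono hc).trans (dContent_iUnion_le hβ _)
    _ ≤ omegaC β * ∑' i, 3 ^ n * ENNReal.ofReal (2 ^ β) * ENNReal.ofReal ((c i).2 ^ β) := by
        gcongr with i
        exact dContent_ball_le hβ hl _ _
    _ = 3 ^ n * ENNReal.ofReal (2 ^ β) * ∑' i, omegaC β * ENNReal.ofReal ((c i).2 ^ β) := by
        rw [ENNReal.tsum_mul_left, ENNReal.tsum_mul_left]
        ring

end ContentComparison

section MaximalFunctions

variable {n : ℕ} {β : ℝ} {a : Rn n} {l : ℝ} {k : ℤ}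

/-- The constant lost when the average over a ball is estimated by the averages over the dyadic
cubes of comparable size that meet it: `3 ^ n` cubes of side at most `2 * r` cover a ball of radius
`r`, and a ball of radius `n + 1` covers a unit cube. -/
def dyadicComparisonConst (n : ℕ) (β : ℝ) : ℝ := 3 ^ n * (2 * (n + 1)) ^ β

lemma dyadicComparisonConst_pos (n : ℕ) (β : ℝ) : 0 < dyadicComparisonConst n β := by
  unfold dyadicComparisonConst
  positivity

lemma choquetOn_dyadicCube_le (hl : 0 < l) (f : Rn n → ℝ≥0∞) {m : Fin n → ℤ} {y : Rn n}
    (hy : y ∈ dyadicCube n a l k m) :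
    choquetOn (dContent n β a l) (dyadicCube n a l k m) f ≤
      ENNReal.ofReal (dyadicSide l k ^ β) * dyadicMaximal n β a l f y := by
  have hs := dyadicSide_pos hl k
  rw [← ENNReal.inv_mul_le_iff (ENNReal.ofReal_pos.2 (by positivity)).ne' ENNReal.ofReal_ne_top]
  exact le_iSup_of_le k (le_iSup₂_of_le m hy le_rfl)

lemma choquetOn_hContent_ball_le (hβ : 0 < β) (hl : 0 < l) (f : Rn n → ℝ≥0∞) (x : Rn n) {r : ℝ}
    (hr : r ≤ dyadicSide l k) :
    choquetOn (hContent n β) (ball x r) f ≤ omegaC β * ENNReal.ofReal ((n + 1) ^ β) *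
      ∑ m ∈ neighborIndices (dyadicIndex a l k x),
        choquetOn (dContent n β a l) (dyadicCube n a l k m) f := by
  have hK : omegaC β * ENNReal.ofReal ((n + 1) ^ β) ≠ ∞ :=
    ENNReal.mul_ne_top (omegaC_ne_top β) ENNReal.ofReal_ne_top
  refine (choquetOn_le_mul hK (hContent_le_mul_dContent (a := a) hβ.le hl) _ f).trans ?_
  rw [← Finset.tsum_subtype]
  gcongr
  exact choquetOn_le_tsum dContent_mono (dContent_iUnion_le hβ)
    (ball_subset_iUnion_dyadicCube hl x hr) f

lemma rpow_dyadicSide_le_dyadicComparisonConst (hβ : 0 ≤ β) (hl : 0 < l) {r : ℝ} (hr : 0 ≤ r)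
    (hkr : dyadicSide l k ≤ 2 * r) :
    (n + 1) ^ β * (3 ^ n * dyadicSide l k ^ β) ≤ dyadicComparisonConst n β * r ^ β := by
  have hs := (dyadicSide_pos hl k).le
  calc (n + 1) ^ β * (3 ^ n * dyadicSide l k ^ β)
      ≤ ((n : ℝ) + 1) ^ β * (3 ^ n * (2 * r) ^ β) := by gcongr
    _ = dyadicComparisonConst n β * r ^ β := by
        rw [dyadicComparisonConst, Real.mul_rpow two_pos.le hr,
          Real.mul_rpow two_pos.le (by positivity)]
        ring

theorem superlevel_maximalH_subset_dyadicDilation (hβ : 0 < β) (hl : 0 < l) (f : Rn n → ℝ≥0∞)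
    (t : ℝ≥0∞) :
    {x | t < maximalH n β f x} ⊆ dyadicDilation n a l
      {y | ENNReal.ofReal (dyadicComparisonConst n β)⁻¹ * t < dyadicMaximal n β a l f y} := by
  intro x hx
  by_contra hfar
  refine (show t < maximalH n β f x from hx).not_ge (iSup₂_le fun r hr => ?_)
  obtain ⟨k, hrk, hkr⟩ := exists_dyadicSide_mem_Icc hl hr
  set A := dyadicComparisonConst n β
  have hA : 0 < A := dyadicComparisonConst_pos n β
  set s := dyadicSide l k
  have hs : 0 < s := dyadicSide_pos hl k
  have hcube : ∀ m ∈ neighborIndices (dyadicIndex a l k x),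
      choquetOn (dContent n β a l) (dyadicCube n a l k m) f ≤
        ENNReal.ofReal (s ^ β) * (ENNReal.ofReal A⁻¹ * t) := by
    intro m hm
    obtain ⟨y, hy, hyt⟩ := not_subset.1 fun hsub =>
      hfar ⟨k, m, hsub, mem_neighborIndices_comm.1 hm⟩
    exact (choquetOn_dyadicCube_le hl f hy).trans (by gcongr; exact not_lt.1 hyt)
  have hconst : ENNReal.ofReal ((n + 1) ^ β) * (3 ^ n * ENNReal.ofReal (s ^ β)) *
      ENNReal.ofReal A⁻¹ ≤ ENNReal.ofReal (r ^ β) := by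
    have hthree : (3 : ℝ≥0∞) ^ n = ENNReal.ofReal (3 ^ n) := by simp [ENNReal.ofReal_pow]
    rw [hthree, ← ENNReal.ofReal_mul (by positivity), ← ENNReal.ofReal_mul (by positivity),
      ← ENNReal.ofReal_mul (by positivity)]
    gcongr
    rw [← div_eq_mul_inv, div_le_iff₀' hA]
    exact rpow_dyadicSide_le_dyadicComparisonConst hβ.le hl hr.le hkr
  rw [mul_comm, ← div_eq_mul_inv]
  refine ENNReal.div_le_of_le_mul ?_
  calc choquetOn (hContent n β) (ball x r) f
      ≤ omegaC β * ENNReal.ofReal ((n + 1) ^ β) *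
          ∑ m ∈ neighborIndices (dyadicIndex a l k x),
            choquetOn (dContent n β a l) (dyadicCube n a l k m) f :=
        choquetOn_hContent_ball_le hβ hl f x hrk
    _ ≤ omegaC β * ENNReal.ofReal ((n + 1) ^ β) *
          (3 ^ n * (ENNReal.ofReal (s ^ β) * (ENNReal.ofReal A⁻¹ * t))) := by
        gcongr
        simpa [card_neighborIndices] using Finset.sum_le_card_nsmul _ _ _ hcube
    _ = t * (omegaC β * (ENNReal.ofReal ((n + 1) ^ β) * (3 ^ n * ENNReal.ofReal (s ^ β)) *
          ENNReal.ofReal A⁻¹)) := by ring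
    _ ≤ t * (omegaC β * ENNReal.ofReal (r ^ β)) := by gcongr

end MaximalFunctions

lemma hContent_dyadicDilation_le {n : ℕ} {β : ℝ} {a : Rn n} {l : ℝ} (hβ0 : 0 < β) (hβn : β ≤ n)
    (hl : 0 < l) (E : Set (Rn n)) :
    hContent n β (dyadicDilation n a l E) ≤
      ENNReal.ofReal (3 ^ n * dyadicComparisonConst n β) * hContent n β E := by
  calc hContent n β (dyadicDilation n a l E)
      ≤ omegaC β * ENNReal.ofReal ((n + 1) ^ β) * dContent n β a l (dyadicDilation n a l E) :=
        hContent_le_mul_dContent hβ0.le hl _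
    _ ≤ omegaC β * ENNReal.ofReal ((n + 1) ^ β) * (3 ^ n * dContent n β a l E) := by
        gcongr
        exact dContent_dyadicDilation_le hβ0 hβn hl E
    _ = ENNReal.ofReal ((n + 1) ^ β) * 3 ^ n * (omegaC β * dContent n β a l E) := by ring
    _ ≤ ENNReal.ofReal ((n + 1) ^ β) * 3 ^ n *
          (3 ^ n * ENNReal.ofReal (2 ^ β) * hContent n β E) := by
        gcongr ENNReal.ofReal ((n + 1) ^ β) * 3 ^ n * ?_
        exact omegaC_mul_dContent_le hβ0 hl E
    _ = ENNReal.ofReal (3 ^ n * dyadicComparisonConst n β) * hContent n β E := by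
        rw [dyadicComparisonConst, Real.mul_rpow two_pos.le (by positivity),
          ENNReal.ofReal_mul (by positivity), ENNReal.ofReal_mul (by positivity),
          ENNReal.ofReal_mul (by positivity), ENNReal.ofReal_pow (by positivity),
          ENNReal.ofReal_ofNat]
        ring

theorem statement11_general (n : ℕ) (β : ℝ) (hβ0 : 0 < β) (hβn : β ≤ n) :
    ∃ c C : ℝ, 0 < c ∧ 0 < C ∧
      ∀ (a : Rn n) (l : ℝ), 0 < l → ∀ (f : Rn n → ℝ≥0∞) (t : ℝ≥0∞),
        hContent n β {x | t < maximalH n β f x} ≤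
          ENNReal.ofReal C *
            hContent n β {x | ENNReal.ofReal c * t < dyadicMaximal n β a l f x} := by
  have hA := dyadicComparisonConst_pos n β
  refine ⟨_, _, inv_pos.2 hA, mul_pos (by positivity : (0 : ℝ) < 3 ^ n) hA, fun a l hl f t => ?_⟩
  exact (hContent_mono (superlevel_maximalH_subset_dyadicDilation hβ0 hl f t)).trans
    (hContent_dyadicDilation_le hβ0 hβn hl _)

/-- Comparison of the level sets of the centered Hausdorff content
maximal function and the dyadic Hausdorff content maximal function associated
with the lattice generated by a cube `Q₀` (corner `a`, side length `l > 0`). -/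
theorem statement11 (n : ℕ) (β : ℝ) (hβ0 : 0 < β) (hβn : β < n)
    (a : Rn n) (l : ℝ) (hl : 0 < l) :
    ∃ c C : ℝ, 0 < c ∧ 0 < C ∧ ∀ (f : Rn n → ℝ≥0∞) (t : ℝ), 0 < t →
      hContent n β {x | ENNReal.ofReal t < maximalH n β f x} ≤
        ENNReal.ofReal C *
          hContent n β {x | ENNReal.ofReal (c * t) < dyadicMaximal n β a l f x} := by
  obtain ⟨c, C, hc, hC, h⟩ := statement11_general n β hβ0 hβn.le
  refine ⟨c, C, hc, hC, fun f t _ => ?_⟩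
  simpa only [ENNReal.ofReal_mul hc.le] using h a l hl f (ENNReal.ofReal t)

end
end

section
/- Let 0 < γ < α < n/s and 1 < s < n/α. There exists a constant C = C(n, α, γ, s) > 0 such that for every real-valued function f and every x ∈ ℝ^n, M_{cap_{γ,s}} f(x) ≤ C (M_{cap_{α,s}} (|f|^{(n-αs)/(n-γs)})(x))^{(n-γs)/(n-αs)}. -/
open scoped ENNReal
open Metric Set MeasureTheory

noncomputable section

/-- The constant `γ(α)` in the Riesz kernel `I_α = (1/γ(α)) |x|^{α-n}`. -/
noncomputable def rieszConst (n : ℕ) (α : ℝ) : ℝ :=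
  Real.pi ^ ((n : ℝ) / 2) * 2 ^ α * Real.Gamma (α / 2) / Real.Gamma (((n : ℝ) - α) / 2)

/-- The Riesz potential `I_α * φ` of a nonnegative function `φ`. -/
noncomputable def rieszPot (n : ℕ) (α : ℝ) (φ : Rn n → ℝ≥0∞) (x : Rn n) : ℝ≥0∞ :=
  ∫⁻ y, ENNReal.ofReal ((1 / rieszConst n α) * ‖x - y‖ ^ (α - (n : ℝ))) * φ y

/-- The Riesz capacity `cap_{α,s}(E) = inf {‖φ‖_{L^s}^s : φ ≥ 0, I_α*φ ≥ 1 on E}`. -/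
noncomputable def rieszCap (n : ℕ) (α s : ℝ) (E : Set (Rn n)) : ℝ≥0∞ :=
  ⨅ (φ : Rn n → ℝ≥0∞) (_ : ∀ x ∈ E, 1 ≤ rieszPot n α φ x), ∫⁻ y, φ y ^ s

/-- The capacitary maximal function associated to the Riesz capacity:
`M_{cap_{α,s}} g(x) := sup_{r>0} (1/(cap_{α,s}(B(0,1)) r^{n-αs})) ∫_{B(x,r)} g d cap_{α,s}`. -/
noncomputable def maximalCap (n : ℕ) (α s : ℝ) (g : Rn n → ℝ≥0∞) (x : Rn n) : ℝ≥0∞ :=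
  ⨆ (r : ℝ) (_ : 0 < r),
    (rieszCap n α s (ball (0 : Rn n) 1) * ENNReal.ofReal (r ^ ((n : ℝ) - α * s)))⁻¹ *
      choquetOn (rieszCap n α s) (ball x r) g

/-- `Γ_{α,s}(g) := inf {‖φ‖_{L^s}^s : φ ≥ 0, I_α * φ ≥ g everywhere}`. -/
noncomputable def rieszGammaFunc (n : ℕ) (α s : ℝ) (g : Rn n → ℝ≥0∞) : ℝ≥0∞ :=
  ⨅ (φ : Rn n → ℝ≥0∞) (_ : ∀ x, g x ≤ rieszPot n α φ x), ∫⁻ y, φ y ^ s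

/-!
With `θ = (n - γs) / (n - αs)`, the capacities are compared through Hausdorff content:
`cap_{γ,s} ≲ H^{n-γs} ≲ cap_{α,s} ^ θ`. The first inequality is the scaling of the capacity of a
ball together with countable subadditivity. For the second, let `I_α * φ ≥ 1` on `E` and choose `R`
with `∫ φ ^ s ≈ R ^ (n - αs)`. Cutting the potential into dyadic annuli and applying Hölder's
inequality on each shows that around every point of `E` some ball of radius `t ≤ R` carries energy
`∫ φ ^ s ≳ t ^ (n - γs) * R ^ (γs - αs)`, for otherwise the pieces sum geometrically to less than
`1`. Vitali's covering lemma turns these balls into an efficient cover.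

For Choquet integrals, the substitution `t = τ ^ θ` leaves `∫ θ τ ^ (θ - 1) h(τ) ^ θ dτ`, where
`h(τ)` is the capacity of `{g > τ ^ θ}`, and `τ h(τ) ≤ ∫ h` because `h` is decreasing.
-/

open scoped NNReal

lemma lintegral_Ioi_eq_lintegral_comp_rpow {θ : ℝ} (hθ : 0 < θ) (g : ℝ → ℝ≥0∞) :
    ∫⁻ t in Ioi (0 : ℝ), g t =
      ∫⁻ τ in Ioi (0 : ℝ), ENNReal.ofReal (θ * τ ^ (θ - 1)) * g (τ ^ θ) := by
  have himage : (fun τ : ℝ => τ ^ θ) '' Ioi 0 = Ioi 0 := by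
    refine (image_subset_iff.2 fun τ hτ => Real.rpow_pos_of_pos hτ θ).antisymm fun t ht => ?_
    exact ⟨t ^ θ⁻¹, Real.rpow_pos_of_pos ht _, Real.rpow_inv_rpow (le_of_lt ht) hθ.ne'⟩
  have hmono : MonotoneOn (fun τ : ℝ => τ ^ θ) (Ioi 0) := fun a ha b _ hab =>
    Real.rpow_le_rpow (le_of_lt ha) hab hθ.le
  have hderiv : ∀ τ ∈ Ioi (0 : ℝ),
      HasDerivWithinAt (fun τ : ℝ => τ ^ θ) (θ * τ ^ (θ - 1)) (Ioi 0) τ := fun τ hτ =>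
    (Real.hasDerivAt_rpow_const (Or.inl (ne_of_gt hτ))).hasDerivWithinAt
  simpa only [himage] using
    lintegral_image_eq_lintegral_deriv_mul_of_monotoneOn measurableSet_Ioi hderiv hmono g

lemma ofReal_mul_le_lintegral_Ioi_of_antitoneOn {h : ℝ → ℝ≥0∞} (hh : AntitoneOn h (Ioi 0))
    {t : ℝ} (ht : 0 < t) : ENNReal.ofReal t * h t ≤ ∫⁻ u in Ioi (0 : ℝ), h u :=
  calc ENNReal.ofReal t * h t = ∫⁻ _ in Ioc 0 t, h t := by simp [mul_comm]
    _ ≤ ∫⁻ u in Ioc 0 t, h u :=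
        setLIntegral_mono' measurableSet_Ioc fun u hu => hh hu.1 ht hu.2
    _ ≤ ∫⁻ u in Ioi (0 : ℝ), h u := lintegral_mono_set Ioc_subset_Ioi_self

lemma lintegral_rpow_sub_one_mul_rpow_le_of_antitoneOn {h : ℝ → ℝ≥0∞}
    (hh : AntitoneOn h (Ioi 0)) {θ : ℝ} (hθ : 1 ≤ θ) :
    ∫⁻ τ in Ioi (0 : ℝ), ENNReal.ofReal (θ * τ ^ (θ - 1)) * h τ ^ θ ≤
      ENNReal.ofReal θ * (∫⁻ τ in Ioi (0 : ℝ), h τ) ^ θ := by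
  set J := ∫⁻ τ in Ioi (0 : ℝ), h τ
  have hθ1 : 0 ≤ θ - 1 := sub_nonneg.2 hθ
  have rpow_split (z : ℝ≥0∞) : z ^ θ = z ^ (θ - 1) * z := by
    simpa using ENNReal.rpow_add_of_nonneg (x := z) _ _ hθ1 zero_le_one
  calc ∫⁻ τ in Ioi (0 : ℝ), ENNReal.ofReal (θ * τ ^ (θ - 1)) * h τ ^ θ
      = ∫⁻ τ in Ioi (0 : ℝ), ENNReal.ofReal θ * (ENNReal.ofReal τ * h τ) ^ (θ - 1) * h τ := by
        refine setLIntegral_congr_fun measurableSet_Ioi fun τ hτ => ?_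
        simp only [rpow_split (h τ), ENNReal.ofReal_mul (zero_le_one.trans hθ),
          ← ENNReal.ofReal_rpow_of_pos (mem_Ioi.1 hτ), ENNReal.mul_rpow_of_nonneg _ _ hθ1]
        ring
    _ ≤ ∫⁻ τ in Ioi (0 : ℝ), ENNReal.ofReal θ * J ^ (θ - 1) * h τ := by
        refine setLIntegral_mono' measurableSet_Ioi fun τ hτ => ?_
        gcongr
        exact ofReal_mul_le_lintegral_Ioi_of_antitoneOn hh hτ
    _ = ENNReal.ofReal θ * J ^ (θ - 1) * J :=
        lintegral_const_mul'' _ (aemeasurable_restrict_of_antitoneOn measurableSet_Ioi hh)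
    _ = ENNReal.ofReal θ * J ^ θ := by rw [rpow_split J, mul_assoc]

lemma choquetOn_rpow_inv {X : Type*} (c : Set X → ℝ≥0∞) (A : Set X) (g : X → ℝ≥0∞) {θ : ℝ}
    (hθ : 0 < θ) :
    choquetOn c A (fun x => g x ^ θ⁻¹) =
      ∫⁻ τ in Ioi (0 : ℝ), c {x | x ∈ A ∧ ENNReal.ofReal (τ ^ θ) < g x} := by
  refine setLIntegral_congr_fun measurableSet_Ioi fun τ hτ => ?_
  simp only [ENNReal.lt_rpow_inv_iff hθ, ENNReal.ofReal_rpow_of_pos (mem_Ioi.1 hτ)]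

lemma choquetOn_le_of_le_rpow {X : Type*} {c₁ c₂ : Set X → ℝ≥0∞} {K : ℝ≥0} {θ : ℝ}
    (hθ : 1 ≤ θ) (hc₂ : Monotone c₂) (hc : ∀ E, c₁ E ≤ K * c₂ E ^ θ) (A : Set X)
    (g : X → ℝ≥0∞) :
    choquetOn c₁ A g ≤ K * ENNReal.ofReal θ * choquetOn c₂ A (fun x => g x ^ θ⁻¹) ^ θ := by
  have hθ0 : 0 < θ := one_pos.trans_le hθ
  have hanti : AntitoneOn (fun τ : ℝ => c₂ {x | x ∈ A ∧ ENNReal.ofReal (τ ^ θ) < g x})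
      (Ioi 0) := fun τ hτ τ' _ hle => hc₂ fun x hx => ⟨hx.1, hx.2.trans_le' <|
    ENNReal.ofReal_le_ofReal (Real.rpow_le_rpow (le_of_lt hτ) hle hθ0.le)⟩
  calc choquetOn c₁ A g
      ≤ ∫⁻ t in Ioi (0 : ℝ), K * c₂ {x | x ∈ A ∧ ENNReal.ofReal t < g x} ^ θ :=
        lintegral_mono fun t => hc _
    _ = K * ∫⁻ t in Ioi (0 : ℝ), c₂ {x | x ∈ A ∧ ENNReal.ofReal t < g x} ^ θ :=
        lintegral_const_mul' _ _ ENNReal.coe_ne_top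
    _ ≤ K * (ENNReal.ofReal θ * choquetOn c₂ A (fun x => g x ^ θ⁻¹) ^ θ) := by
        rw [lintegral_Ioi_eq_lintegral_comp_rpow hθ0, choquetOn_rpow_inv _ _ _ hθ0]
        gcongr
        exact lintegral_rpow_sub_one_mul_rpow_le_of_antitoneOn hanti hθ
    _ = K * ENNReal.ofReal θ * choquetOn c₂ A (fun x => g x ^ θ⁻¹) ^ θ := (mul_assoc _ _ _).symm

/-- The `d`-dimensional Hausdorff content `inf ∑ rᵢ ^ d`, the infimum being over countable covers
of `E` by closed balls of radii `rᵢ > 0`. A cover is encoded as its set of pairs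
(centre, radius). -/
def hausdorffContent {X : Type*} [PseudoMetricSpace X] (d : ℝ) (E : Set X) : ℝ≥0∞ :=
  ⨅ (u : Set (X × ℝ)) (_ : u.Countable) (_ : ∀ b ∈ u, 0 < b.2)
    (_ : E ⊆ ⋃ b ∈ u, closedBall b.1 b.2), ∑' b : u, ENNReal.ofReal (b.1.2 ^ d)

section HausdorffContent

variable {X : Type*} [PseudoMetricSpace X] {d : ℝ} {E : Set X}

lemma hausdorffContent_le_tsum {u : Set (X × ℝ)} (hu : u.Countable) (hpos : ∀ b ∈ u, 0 < b.2)
    (hE : E ⊆ ⋃ b ∈ u, closedBall b.1 b.2) :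
    hausdorffContent d E ≤ ∑' b : u, ENNReal.ofReal (b.1.2 ^ d) :=
  iInf₂_le_of_le u hu (iInf₂_le hpos hE)

lemma le_mul_hausdorffContent {K : ℝ≥0} (hK : K ≠ 0) {a : ℝ≥0∞}
    (h : ∀ u : Set (X × ℝ), u.Countable → (∀ b ∈ u, 0 < b.2) →
      E ⊆ ⋃ b ∈ u, closedBall b.1 b.2 → a ≤ K * ∑' b : u, ENNReal.ofReal (b.1.2 ^ d)) :
    a ≤ K * hausdorffContent d E := by
  simp only [hausdorffContent,
    ENNReal.mul_iInf_of_ne (ENNReal.coe_ne_zero.2 hK) ENNReal.coe_ne_top]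
  exact le_iInf₂ fun u hu => le_iInf₂ fun hpos hE => h u hu hpos hE

lemma hausdorffContent_closedBall_le (d : ℝ) (x : X) {r : ℝ} (hr : 0 < r) :
    hausdorffContent d (closedBall x r) ≤ ENNReal.ofReal (r ^ d) :=
  (hausdorffContent_le_tsum (countable_singleton (x, r)) (by simpa) (by simp)).trans_eq (by simp)

/-- Vitali's covering lemma makes the balls carrying mass disjoint, at the price of enlarging them
five times. -/
lemma hausdorffContent_le_measure_univ [TopologicalSpace.SeparableSpace X] [MeasurableSpace X]
    [OpensMeasurableSpace X] {μ : Measure X} {R : ℝ}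
    (h : ∀ x ∈ E, ∃ t ∈ Ioc 0 R, ENNReal.ofReal (t ^ d) ≤ μ (closedBall x t)) :
    hausdorffContent d E ≤ ENNReal.ofReal (5 ^ d) * μ univ := by
  obtain ⟨u, hut, hdisj, hcov⟩ := Vitali.exists_disjoint_subfamily_covering_enlargement_closedBall
    {b : X × ℝ | b.2 ∈ Ioc 0 R ∧ ENNReal.ofReal (b.2 ^ d) ≤ μ (closedBall b.1 b.2)}
    Prod.fst Prod.snd R (fun b hb => hb.1.2) 5 (by norm_num)
  have hpos : ∀ b ∈ u, 0 < b.2 := fun b hb => (hut hb).1.1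
  have hcount : u.Countable := hdisj.countable_of_nonempty_interior fun b hb =>
    (nonempty_ball.2 (hpos b hb)).mono ball_subset_interior_closedBall
  have hsub : E ⊆ ⋃ b ∈ Prod.map id (5 * ·) '' u, closedBall b.1 b.2 := fun x hx => by
    obtain ⟨t, ht, hμ⟩ := h x hx
    obtain ⟨b, hb, hsub⟩ := hcov (x, t) ⟨ht, hμ⟩
    rw [biUnion_image]
    exact mem_biUnion hb (hsub (mem_closedBall_self ht.1.le))
  have hinj : Function.Injective (Prod.map id (5 * ·) : X × ℝ → X × ℝ) :=
    Function.injective_id.prodMap (mul_right_injective₀ (by norm_num))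
  calc hausdorffContent d E
      ≤ ∑' b : Prod.map id (5 * ·) '' u, ENNReal.ofReal (b.1.2 ^ d) :=
        hausdorffContent_le_tsum (hcount.image _)
          (forall_mem_image.2 fun b hb => mul_pos (by norm_num) (hpos b hb)) hsub
    _ = ENNReal.ofReal (5 ^ d) * ∑' b : u, ENNReal.ofReal (b.1.2 ^ d) := by
        rw [tsum_image (fun b : X × ℝ => ENNReal.ofReal (b.2 ^ d)) hinj.injOn,
          ← ENNReal.tsum_mul_left]
        refine tsum_congr fun b => ?_
        rw [← ENNReal.ofReal_mul (by positivity), Prod.map_snd,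
          Real.mul_rpow (by norm_num) (hpos b b.2).le]
    _ ≤ ENNReal.ofReal (5 ^ d) * ∑' b : u, μ (closedBall b.1.1 b.1.2) := by
        gcongr with b
        exact (hut b.2).2
    _ ≤ ENNReal.ofReal (5 ^ d) * μ univ := by
        rw [← measure_biUnion hcount hdisj fun b _ => measurableSet_closedBall]
        gcongr
        exact subset_univ _

end HausdorffContent

lemma setLIntegral_le_rpow_mul_measure_rpow {X : Type*} [MeasurableSpace X] (μ : Measure X)
    {s : ℝ} (hs : 1 ≤ s) (f : X → ℝ≥0∞) (B : Set X) :
    ∫⁻ y in B, f y ∂μ ≤ (∫⁻ y in B, f y ^ s ∂μ) ^ (1 / s) * μ B ^ (1 - 1 / s) := by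
  obtain ⟨g, hg, hgf, hfg⟩ := exists_measurable_le_lintegral_eq (μ := μ.restrict B) f
  calc ∫⁻ y in B, f y ∂μ
      ≤ (∫⁻ y in B, g y ^ s ∂μ) ^ (1 / s) * μ B ^ (1 - 1 / s) := by
        simpa [hfg, eLpNorm'] using eLpNorm'_le_eLpNorm'_mul_rpow_measure_univ one_pos hs
          (hg.aestronglyMeasurable (μ := μ.restrict B))
    _ ≤ (∫⁻ y in B, f y ^ s ∂μ) ^ (1 / s) * μ B ^ (1 - 1 / s) := by
        gcongr with y
        exact hgf y

/-- The Riesz kernel `I_α`. Its value at the origin is `0` when `α < n`, since `0 ^ (α - n) = 0`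
there. -/
def rieszKernel (n : ℕ) (α : ℝ) (z : Rn n) : ℝ≥0∞ :=
  ENNReal.ofReal (1 / rieszConst n α * ‖z‖ ^ (α - (n : ℝ)))

section Riesz

variable {n : ℕ} {α s d : ℝ}

lemma rieszConst_pos (hα : 0 < α) (hαn : α < n) : 0 < rieszConst n α := by
  have := Real.Gamma_pos_of_pos (half_pos hα)
  have := Real.Gamma_pos_of_pos (half_pos (sub_pos.2 hαn))
  have := Real.pi_pos
  unfold rieszConst
  positivity

lemma rieszKernel_le (hα : 0 < α) (hαn : α < n) {t : ℝ} (ht : 0 < t) {z : Rn n} (hz : t ≤ ‖z‖) :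
    rieszKernel n α z ≤ ENNReal.ofReal (1 / rieszConst n α * t ^ (α - (n : ℝ))) := by
  have := rieszConst_pos hα hαn
  unfold rieszKernel
  gcongr ENNReal.ofReal (_ * ?_)
  exact Real.rpow_le_rpow_of_nonpos ht hz (sub_neg.2 hαn).le

lemma le_rieszKernel (hα : 0 < α) (hαn : α < n) {t : ℝ} {z : Rn n} (hz0 : z ≠ 0) (hz : ‖z‖ ≤ t) :
    ENNReal.ofReal (1 / rieszConst n α * t ^ (α - (n : ℝ))) ≤ rieszKernel n α z := by
  have := rieszConst_pos hα hαn
  unfold rieszKernel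
  gcongr ENNReal.ofReal (_ * ?_)
  exact Real.rpow_le_rpow_of_nonpos (norm_pos_iff.2 hz0) hz (sub_neg.2 hαn).le

lemma rieszPot_eq_lintegral_rieszKernel (φ : Rn n → ℝ≥0∞) (x : Rn n) :
    rieszPot n α φ x = ∫⁻ y, rieszKernel n α (x - y) * φ y := rfl

lemma rieszPot_mono {φ ψ : Rn n → ℝ≥0∞} (h : φ ≤ ψ) (x : Rn n) :
    rieszPot n α φ x ≤ rieszPot n α ψ x :=
  lintegral_mono fun y => mul_le_mul_right (h y) _

lemma volume_real_unitBall_pos (n : ℕ) : 0 < volume.real (ball (0 : Rn n) 1) :=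
  ENNReal.toReal_pos (measure_ball_pos _ _ one_pos).ne' measure_ball_lt_top.ne

lemma volume_closedBall_eq_ofReal (x : Rn n) {t : ℝ} (ht : 0 ≤ t) :
    volume (closedBall x t) =
      ENNReal.ofReal (volume.real (ball (0 : Rn n) 1) * t ^ (n : ℝ)) := by
  rw [Measure.addHaar_closedBall _ _ ht, ENNReal.ofReal_mul measureReal_nonneg,
    ofReal_measureReal measure_ball_lt_top.ne, mul_comm, finrank_euclideanSpace_fin,
    Real.rpow_natCast]

lemma exists_volume_le_hausdorffContent (n : ℕ) :
    ∃ C : ℝ≥0, ∀ E : Set (Rn n), volume E ≤ C * hausdorffContent n E := by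
  have hω := volume_real_unitBall_pos n
  refine ⟨(volume.real (ball (0 : Rn n) 1)).toNNReal, fun E =>
    le_mul_hausdorffContent (Real.toNNReal_pos.2 hω).ne' fun u hu hpos hE => ?_⟩
  calc volume E ≤ ∑' b : u, volume (closedBall b.1.1 b.1.2) :=
        (measure_mono hE).trans (measure_biUnion_le _ hu _)
    _ = ENNReal.ofReal (volume.real (ball (0 : Rn n) 1)) *
          ∑' b : u, ENNReal.ofReal (b.1.2 ^ (n : ℝ)) := by
        rw [← ENNReal.tsum_mul_left]
        refine tsum_congr fun b => ?_
        rw [volume_closedBall_eq_ofReal _ (hpos b b.2).le, ENNReal.ofReal_mul hω.le]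

lemma rieszCap_mono (n : ℕ) (α s : ℝ) : Monotone (rieszCap n α s) := fun _ _ h =>
  le_iInf₂ fun φ hφ => iInf₂_le φ fun x hx => hφ x (h hx)

lemma rieszCap_le_lintegral {φ : Rn n → ℝ≥0∞} {E : Set (Rn n)}
    (h : ∀ x ∈ E, 1 ≤ rieszPot n α φ x) : rieszCap n α s E ≤ ∫⁻ y, φ y ^ s :=
  iInf₂_le φ h

lemma le_mul_rpow_rieszCap {C : ℝ≥0} (hC : C ≠ 0) {p : ℝ} (hp : 0 < p) {E : Set (Rn n)} {a : ℝ≥0∞}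
    (h : ∀ φ : Rn n → ℝ≥0∞, (∀ x ∈ E, 1 ≤ rieszPot n α φ x) → a ≤ C * (∫⁻ y, φ y ^ s) ^ p) :
    a ≤ C * rieszCap n α s E ^ p := by
  rw [← ENNReal.orderIsoRpow_apply p hp, rieszCap]
  simp only [OrderIso.map_iInf, ENNReal.mul_iInf_of_ne (ENNReal.coe_ne_zero.2 hC)
    ENNReal.coe_ne_top]
  exact le_iInf₂ h

lemma rieszCap_iUnion_le_tsum {ι : Type*} [Countable ι] (hs : 0 < s) {E : ι → Set (Rn n)}
    {φ : ι → Rn n → ℝ≥0∞} (hφ : ∀ i, Measurable (φ i))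
    (h : ∀ i, ∀ x ∈ E i, 1 ≤ rieszPot n α (φ i) x) :
    rieszCap n α s (⋃ i, E i) ≤ ∑' i, ∫⁻ y, φ i y ^ s := by
  have hadm : ∀ x ∈ ⋃ i, E i, 1 ≤ rieszPot n α (⨆ i, φ i) x := fun x hx => by
    obtain ⟨i, hi⟩ := mem_iUnion.1 hx
    exact (h i x hi).trans (rieszPot_mono (le_iSup φ i) x)
  refine (rieszCap_le_lintegral hadm).trans ?_
  rw [← lintegral_tsum fun i => ((hφ i).pow_const s).aemeasurable]
  refine lintegral_mono fun y => ?_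
  rw [iSup_apply, ← ENNReal.orderIsoRpow_apply s hs, OrderIso.map_iSup]
  exact iSup_le fun i => ENNReal.le_tsum (f := fun i => φ i y ^ s) i

lemma le_rieszPot_indicator_closedBall (hα : 0 < α) (hαn : α < n) {t : ℝ} {x z : Rn n}
    (hz : z ∈ closedBall x t) (c : ℝ≥0∞) :
    ENNReal.ofReal (1 / rieszConst n α * (2 * t) ^ (α - (n : ℝ))) * c * volume (closedBall x t) ≤
      rieszPot n α ((closedBall x t).indicator fun _ => c) z := by
  have : Nonempty (Fin n) := ⟨⟨0, by exact_mod_cast hα.trans hαn⟩⟩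
  calc _ = ∫⁻ _ in closedBall x t,
          ENNReal.ofReal (1 / rieszConst n α * (2 * t) ^ (α - (n : ℝ))) * c :=
        (setLIntegral_const _ _).symm
    _ ≤ ∫⁻ y in closedBall x t, rieszKernel n α (z - y) * c := by
        refine setLIntegral_mono_ae' measurableSet_closedBall ?_
        filter_upwards [compl_mem_ae_iff.2 (measure_singleton z)] with y hyz hy
        have hdist : ‖z - y‖ ≤ 2 * t := by
          rw [← dist_eq_norm]
          linarith [dist_triangle_right z y x, mem_closedBall.1 hz, mem_closedBall.1 hy]
        gcongr
        exact le_rieszKernel hα hαn (sub_ne_zero.2 (Ne.symm hyz)) hdist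
    _ = rieszPot n α ((closedBall x t).indicator fun _ => c) z := by
        rw [rieszPot_eq_lintegral_rieszKernel, ← lintegral_indicator measurableSet_closedBall]
        refine lintegral_congr fun y => ?_
        exact indicator_mul_right _ _ _

lemma exists_closedBall_test_function (hα : 0 < α) (hαn : α < n) (hs : 0 < s) :
    ∃ C : ℝ≥0, C ≠ 0 ∧ ∀ (x : Rn n) (t : ℝ), 0 < t → ∃ φ : Rn n → ℝ≥0∞, Measurable φ ∧
      (∀ z ∈ closedBall x t, 1 ≤ rieszPot n α φ z) ∧
      ∫⁻ y, φ y ^ s ≤ C * ENNReal.ofReal (t ^ ((n : ℝ) - α * s)) := by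
  have hγ := rieszConst_pos hα hαn
  have hω := volume_real_unitBall_pos n
  set ω := volume.real (ball (0 : Rn n) 1)
  set A := 1 / rieszConst n α * 2 ^ (α - (n : ℝ)) * ω with hA
  have hA0 : 0 < A := by positivity
  refine ⟨(A⁻¹ ^ s * ω).toNNReal, (Real.toNNReal_pos.2 (by positivity)).ne', fun x t ht =>
    ⟨(closedBall x t).indicator fun _ => ENNReal.ofReal (A⁻¹ * t ^ (-α)),
      measurable_const.indicator measurableSet_closedBall, fun z hz => ?_, ?_⟩⟩
  · refine (le_of_eq ?_).trans (le_rieszPot_indicator_closedBall hα hαn hz _)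
    rw [volume_closedBall_eq_ofReal _ ht.le, ← ENNReal.ofReal_mul (by positivity),
      ← ENNReal.ofReal_mul (by positivity), eq_comm, ENNReal.ofReal_eq_one]
    have hcancel : t ^ (α - (n : ℝ)) * t ^ (-α) * t ^ (n : ℝ) = 1 := by
      rw [← Real.rpow_add ht, ← Real.rpow_add ht]
      ring_nf
      exact Real.rpow_zero t
    calc _ = A * A⁻¹ * (t ^ (α - (n : ℝ)) * t ^ (-α) * t ^ (n : ℝ)) := by
          rw [hA, Real.mul_rpow zero_le_two ht.le]
          ring
      _ = 1 := by rw [hcancel, mul_inv_cancel₀ hA0.ne', one_mul]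
  · refine le_of_eq ?_
    have hpow : (fun y => (closedBall x t).indicator
        (fun _ => ENNReal.ofReal (A⁻¹ * t ^ (-α))) y ^ s) =
        (closedBall x t).indicator fun _ => ENNReal.ofReal ((A⁻¹ * t ^ (-α)) ^ s) := by
      rw [← ENNReal.ofReal_rpow_of_pos (by positivity)]
      exact (indicator_comp_of_zero (g := fun a : ℝ≥0∞ => a ^ s)
        (ENNReal.zero_rpow_of_pos hs)).symm
    rw [hpow, lintegral_indicator_const measurableSet_closedBall,
      volume_closedBall_eq_ofReal _ ht.le, ← ENNReal.ofReal_mul (by positivity)]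
    refine Eq.trans ?_ (ENNReal.ofReal_mul (by positivity))
    congr 1
    rw [Real.mul_rpow (by positivity) (by positivity), ← Real.rpow_mul ht.le,
      sub_eq_neg_add, ← neg_mul, Real.rpow_add ht]
    ring

lemma exists_rieszCap_le_hausdorffContent (hα : 0 < α) (hαn : α < n) (hs : 0 < s) :
    ∃ C : ℝ≥0, ∀ E : Set (Rn n),
      rieszCap n α s E ≤ C * hausdorffContent ((n : ℝ) - α * s) E := by
  obtain ⟨C, hC, htest⟩ := exists_closedBall_test_function hα hαn hs
  refine ⟨C, fun E => le_mul_hausdorffContent hC fun u hu hpos hE => ?_⟩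
  have := hu.to_subtype
  choose φ hφ hadm henergy using fun b : u => htest b.1.1 b.1.2 (hpos b b.2)
  calc rieszCap n α s E ≤ rieszCap n α s (⋃ b : u, closedBall b.1.1 b.1.2) :=
        rieszCap_mono n α s (by rwa [biUnion_eq_iUnion] at hE)
    _ ≤ ∑' b : u, ∫⁻ y, φ b y ^ s := rieszCap_iUnion_le_tsum hs hφ hadm
    _ ≤ ∑' b : u, C * ENNReal.ofReal (b.1.2 ^ ((n : ℝ) - α * s)) := ENNReal.tsum_le_tsum henergy
    _ = C * ∑' b : u, ENNReal.ofReal (b.1.2 ^ ((n : ℝ) - α * s)) := ENNReal.tsum_mul_left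

lemma rieszCap_unitBall_lt_top (hα : 0 < α) (hαn : α < n) (hs : 0 < s) :
    rieszCap n α s (ball 0 1) < ∞ := by
  obtain ⟨C, hC⟩ := exists_rieszCap_le_hausdorffContent hα hαn hs
  calc rieszCap n α s (ball 0 1)
      ≤ C * hausdorffContent ((n : ℝ) - α * s) (closedBall (0 : Rn n) 1) :=
        (rieszCap_mono n α s ball_subset_closedBall).trans (hC _)
    _ ≤ C * ENNReal.ofReal (1 ^ ((n : ℝ) - α * s)) := by
        gcongr
        exact hausdorffContent_closedBall_le _ _ one_pos
    _ < ∞ := ENNReal.mul_lt_top ENNReal.coe_lt_top ENNReal.ofReal_lt_top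

lemma iUnion_dyadic_annuli (x : Rn n) {R : ℝ} (hR : 0 < R) :
    ⋃ k : ℤ, closedBall x (R * 2 ^ k) \ closedBall x (R * 2 ^ k / 2) = {x}ᶜ := by
  ext y
  simp only [mem_iUnion, mem_sdiff, mem_closedBall, not_le, mem_compl_iff, mem_singleton_iff]
  constructor
  · rintro ⟨k, -, hk⟩ rfl
    rw [dist_self] at hk
    exact hk.not_ge (by positivity)
  · intro hy
    obtain ⟨k, hk_lt, hk_le⟩ := exists_mem_Ioc_zpow (div_pos (dist_pos.2 hy) hR) one_lt_two
    rw [lt_div_iff₀' hR] at hk_lt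
    rw [div_le_iff₀' hR] at hk_le
    refine ⟨k + 1, hk_le, ?_⟩
    rwa [zpow_add_one₀ two_ne_zero, ← mul_assoc, mul_div_cancel_right₀ _ two_ne_zero]

lemma lintegral_annulus_le (hα : 0 < α) (hαn : α < n) (φ : Rn n → ℝ≥0∞) (x : Rn n) {t : ℝ}
    (ht : 0 < t) :
    ∫⁻ y in closedBall x t \ closedBall x (t / 2), rieszKernel n α (x - y) * φ y ≤
      ENNReal.ofReal (1 / rieszConst n α * (t / 2) ^ (α - (n : ℝ))) *
        ∫⁻ y in closedBall x t, φ y := by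
  rw [← lintegral_const_mul' _ _ ENNReal.ofReal_ne_top]
  refine (setLIntegral_mono' (measurableSet_closedBall.diff measurableSet_closedBall)
    fun y hy => ?_).trans (lintegral_mono_set sdiff_subset)
  gcongr
  refine rieszKernel_le hα hαn (half_pos ht) ?_
  rw [← dist_eq_norm, dist_comm]
  exact (not_le.1 hy.2).le

lemma exists_lintegral_annulus_le (hα : 0 < α) (hαn : α < n) (hs : 1 ≤ s) :
    ∃ A : ℝ≥0, ∀ (φ : Rn n → ℝ≥0∞) (x : Rn n) (t : ℝ), 0 < t →
      ∫⁻ y in closedBall x t \ closedBall x (t / 2), rieszKernel n α (x - y) * φ y ≤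
        A * (ENNReal.ofReal (t ^ (α - n / s)) * (∫⁻ y in closedBall x t, φ y ^ s) ^ (1 / s)) := by
  have hγ := rieszConst_pos hα hαn
  have hω := volume_real_unitBall_pos n
  set ω := volume.real (ball (0 : Rn n) 1)
  have hs1 : 0 ≤ 1 - 1 / s := sub_nonneg.2 ((div_le_one (by positivity)).2 hs)
  refine ⟨(1 / rieszConst n α * 2 ^ ((n : ℝ) - α) * ω ^ (1 - 1 / s)).toNNReal,
    fun φ x t ht => ?_⟩
  set energy := ∫⁻ y in closedBall x t, φ y ^ s
  have hconst : 1 / rieszConst n α * (t / 2) ^ (α - (n : ℝ)) * (ω * t ^ (n : ℝ)) ^ (1 - 1 / s) =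
      1 / rieszConst n α * 2 ^ ((n : ℝ) - α) * ω ^ (1 - 1 / s) * t ^ (α - n / s) := by
    rw [Real.div_rpow ht.le zero_le_two, Real.mul_rpow hω.le (by positivity),
      ← Real.rpow_mul ht.le, ← neg_sub α, Real.rpow_neg zero_le_two,
      show α - n / s = (α - n) + n * (1 - 1 / s) by ring, Real.rpow_add ht]
    ring
  calc _ ≤ ENNReal.ofReal (1 / rieszConst n α * (t / 2) ^ (α - (n : ℝ))) *
          (energy ^ (1 / s) * volume (closedBall x t) ^ (1 - 1 / s)) := by
        refine (lintegral_annulus_le hα hαn φ x ht).trans ?_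
        gcongr
        exact setLIntegral_le_rpow_mul_measure_rpow _ hs φ _
    _ = ENNReal.ofReal (1 / rieszConst n α * (t / 2) ^ (α - (n : ℝ)) *
          (ω * t ^ (n : ℝ)) ^ (1 - 1 / s)) * energy ^ (1 / s) := by
        rw [volume_closedBall_eq_ofReal x ht.le,
          ENNReal.ofReal_rpow_of_nonneg (by positivity) hs1,
          ENNReal.ofReal_mul (p := 1 / rieszConst n α * (t / 2) ^ (α - (n : ℝ))) (by positivity)]
        ring
    _ = _ := by
        rw [hconst, ENNReal.ofReal_mul (by positivity), mul_assoc]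
        rfl

lemma exists_rieszPot_le_tsum_dyadic (hα : 0 < α) (hαn : α < n) (hs : 1 ≤ s) :
    ∃ A : ℝ≥0, ∀ (φ : Rn n → ℝ≥0∞) (x : Rn n) (R : ℝ), 0 < R →
      rieszPot n α φ x ≤ A * ∑' k : ℤ, ENNReal.ofReal ((R * 2 ^ k) ^ (α - n / s)) *
        (∫⁻ y in closedBall x (R * 2 ^ k), φ y ^ s) ^ (1 / s) := by
  obtain ⟨A, hA⟩ := exists_lintegral_annulus_le hα hαn hs
  refine ⟨A, fun φ x R hR => ?_⟩
  have hcentre : rieszKernel n α (x - x) = 0 := by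
    simp [rieszKernel, Real.zero_rpow (sub_neg.2 hαn).ne]
  calc rieszPot n α φ x = ∫⁻ y in {x}ᶜ, rieszKernel n α (x - y) * φ y := by
        rw [rieszPot_eq_lintegral_rieszKernel, ← lintegral_add_compl _ (measurableSet_singleton x),
          lintegral_singleton, hcentre, zero_mul, zero_mul, zero_add]
    _ ≤ ∑' k : ℤ, ∫⁻ y in closedBall x (R * 2 ^ k) \ closedBall x (R * 2 ^ k / 2),
          rieszKernel n α (x - y) * φ y := by
        rw [← iUnion_dyadic_annuli x hR]
        exact lintegral_iUnion_le _ _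
    _ ≤ _ := by
        rw [← ENNReal.tsum_mul_left]
        exact ENNReal.tsum_le_tsum fun k => hA φ x _ (by positivity)

lemma summable_pow_natAbs {q : ℝ} (hq0 : 0 ≤ q) (hq1 : q < 1) :
    Summable fun k : ℤ => q ^ k.natAbs := by
  refine Summable.of_nat_of_neg ?_ ?_ <;>
    simpa using summable_geometric_of_lt_one hq0 hq1

lemma two_zpow_rpow_le_pow_natAbs {δ b : ℝ} {k : ℤ} (h : k * b ≤ -(δ * |(k : ℝ)|)) :
    ((2 : ℝ) ^ k) ^ b ≤ (2 ^ (-δ)) ^ k.natAbs := by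
  rw [← Real.rpow_intCast, ← Real.rpow_mul zero_le_two, ← Real.rpow_natCast,
    ← Real.rpow_mul zero_le_two, Nat.cast_natAbs, Int.cast_abs, neg_mul]
  exact Real.rpow_le_rpow_of_exponent_le one_le_two h

lemma ofReal_rpow_mul_rpow_le_of_le {R r m e : ℝ} (hs : 0 < s) (hR : 0 < R) (hr : 0 < r)
    {F c : ℝ≥0∞} (hF : F ≤ c * ENNReal.ofReal ((R * r) ^ e * R ^ (m - e))) :
    ENNReal.ofReal ((R * r) ^ (-(m / s))) * F ^ (1 / s) ≤
      c ^ (1 / s) * ENNReal.ofReal (r ^ ((e - m) / s)) := by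
  have hs' : 0 ≤ 1 / s := by positivity
  have hscale : (R * r) ^ (-(m / s)) * ((R * r) ^ e * R ^ (m - e)) ^ (1 / s) =
      r ^ ((e - m) / s) := by
    rw [Real.mul_rpow (x := (R * r) ^ e) (by positivity) (by positivity),
      ← Real.rpow_mul (by positivity),
      ← Real.rpow_mul hR.le, ← mul_assoc, ← Real.rpow_add (by positivity),
      Real.mul_rpow hR.le hr.le, mul_right_comm, ← Real.rpow_add hR,
      show -(m / s) + e * (1 / s) + (m - e) * (1 / s) = 0 by ring, Real.rpow_zero, one_mul]
    ring_nf
  calc ENNReal.ofReal ((R * r) ^ (-(m / s))) * F ^ (1 / s)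
      ≤ ENNReal.ofReal ((R * r) ^ (-(m / s))) *
          (c * ENNReal.ofReal ((R * r) ^ e * R ^ (m - e))) ^ (1 / s) := by gcongr
    _ = c ^ (1 / s) * ENNReal.ofReal (r ^ ((e - m) / s)) := by
        rw [ENNReal.mul_rpow_of_nonneg _ _ hs', ENNReal.ofReal_rpow_of_nonneg (by positivity) hs',
          mul_left_comm, ← ENNReal.ofReal_mul (by positivity), hscale]

lemma dyadic_energy_rpow_le {m R : ℝ} (hs : 0 < s) (hR : 0 < R) {c : ℝ≥0∞} {φ : Rn n → ℝ≥0∞}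
    {x : Rn n}
    (hlocal : ∀ t ∈ Ioc 0 R,
      ∫⁻ y in closedBall x t, φ y ^ s ≤ c * ENNReal.ofReal (t ^ d * R ^ (m - d)))
    (htotal : ∫⁻ y, φ y ^ s ≤ c * ENNReal.ofReal (R ^ m)) (k : ℤ) :
    ENNReal.ofReal ((R * 2 ^ k) ^ (-(m / s))) *
        (∫⁻ y in closedBall x (R * 2 ^ k), φ y ^ s) ^ (1 / s) ≤
      c ^ (1 / s) * ENNReal.ofReal ((2 ^ (-min ((d - m) / s) (m / s))) ^ k.natAbs) := by
  rcases le_or_gt k 0 with hk | hk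
  · have hmem : R * 2 ^ k ∈ Ioc 0 R :=
      ⟨by positivity, mul_le_of_le_one_right hR.le (zpow_le_one_of_nonpos₀ one_le_two hk)⟩
    refine (ofReal_rpow_mul_rpow_le_of_le hs hR (by positivity) (hlocal _ hmem)).trans ?_
    gcongr
    refine two_zpow_rpow_le_pow_natAbs ?_
    have hk' : (k : ℝ) ≤ 0 := by exact_mod_cast hk
    rw [abs_of_nonpos hk']
    nlinarith [min_le_left ((d - m) / s) (m / s)]
  · have henergy : ∫⁻ y in closedBall x (R * 2 ^ k), φ y ^ s ≤
        c * ENNReal.ofReal ((R * 2 ^ k) ^ (0 : ℝ) * R ^ (m - 0)) := by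
      rw [Real.rpow_zero, one_mul, sub_zero]
      exact (setLIntegral_le_lintegral _ _).trans htotal
    refine (ofReal_rpow_mul_rpow_le_of_le hs hR (by positivity) henergy).trans ?_
    gcongr
    refine two_zpow_rpow_le_pow_natAbs ?_
    have hk' : (0 : ℝ) < k := by exact_mod_cast hk
    rw [abs_of_pos hk', zero_sub, neg_div]
    nlinarith [min_le_right ((d - m) / s) (m / s)]

lemma exists_rieszPot_le_of_energy_le (hα : 0 < α) (hs : 1 ≤ s) (hαs : α * s < n)
    (hd : n - α * s < d) :
    ∃ A : ℝ≥0, ∀ (φ : Rn n → ℝ≥0∞) (x : Rn n) (R : ℝ) (c : ℝ≥0∞), 0 < R →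
      (∀ t ∈ Ioc 0 R, ∫⁻ y in closedBall x t, φ y ^ s ≤
        c * ENNReal.ofReal (t ^ d * R ^ (n - α * s - d))) →
      ∫⁻ y, φ y ^ s ≤ c * ENNReal.ofReal (R ^ (n - α * s)) →
      rieszPot n α φ x ≤ A * c ^ (1 / s) := by
  have hs0 : 0 < s := one_pos.trans_le hs
  have hαn : α < n := (le_mul_of_one_le_right hα.le hs).trans_lt hαs
  obtain ⟨A, hA⟩ := exists_rieszPot_le_tsum_dyadic hα hαn hs
  set δ := min ((d - (n - α * s)) / s) ((n - α * s) / s)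
  have hδ : 0 < δ := lt_min (div_pos (sub_pos.2 hd) hs0) (div_pos (sub_pos.2 hαs) hs0)
  have hsum : ∑' k : ℤ, ENNReal.ofReal ((2 ^ (-δ)) ^ k.natAbs) ≠ ∞ :=
    (summable_pow_natAbs (Real.rpow_nonneg zero_le_two _)
      (Real.rpow_lt_one_of_one_lt_of_neg one_lt_two (neg_lt_zero.2 hδ))).tsum_ofReal_ne_top
  have hexp : α - n / s = -((n - α * s) / s) := by field_simp; ring
  refine ⟨A * (∑' k : ℤ, ENNReal.ofReal ((2 ^ (-δ)) ^ k.natAbs)).toNNReal,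
    fun φ x R c hR hlocal htotal => ?_⟩
  calc rieszPot n α φ x
      ≤ A * ∑' k : ℤ, c ^ (1 / s) * ENNReal.ofReal ((2 ^ (-δ)) ^ k.natAbs) := by
        refine (hA φ x R hR).trans (mul_le_mul_right (ENNReal.tsum_le_tsum fun k => ?_) _)
        rw [hexp]
        exact dyadic_energy_rpow_le hs0 hR hlocal htotal k
    _ = _ := by
        rw [ENNReal.tsum_mul_left, ENNReal.coe_mul, ENNReal.coe_toNNReal hsum, mul_assoc,
          mul_comm (c ^ _)]

lemma exists_closedBall_energy_ge (hα : 0 < α) (hs : 1 ≤ s) (hαs : α * s < n)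
    (hd : n - α * s < d) :
    ∃ c : ℝ≥0, c ≠ 0 ∧ ∀ (φ : Rn n → ℝ≥0∞) (x : Rn n) (R : ℝ), 0 < R →
      ∫⁻ y, φ y ^ s ≤ c * ENNReal.ofReal (R ^ (n - α * s)) → 1 ≤ rieszPot n α φ x →
      ∃ t ∈ Ioc 0 R,
        c * ENNReal.ofReal (t ^ d * R ^ (n - α * s - d)) ≤ ∫⁻ y in closedBall x t, φ y ^ s := by
  obtain ⟨A, hA⟩ := exists_rieszPot_le_of_energy_le hα hs hαs hd
  have hA1 : 0 < A + 1 := by positivity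
  refine ⟨(A + 1)⁻¹ ^ s, (NNReal.rpow_pos (inv_pos.2 hA1)).ne',
    fun φ x R hR htotal hpot => ?_⟩
  by_contra! hlocal
  have hsmall : A * (A + 1)⁻¹ < 1 := by
    rw [← div_eq_mul_inv, div_lt_one hA1]
    exact lt_add_one A
  have hbound := hA φ x R _ hR (fun t ht => (hlocal t ht).le) htotal
  rw [← ENNReal.coe_rpow_of_nonneg _ (by positivity : 0 ≤ 1 / s), one_div,
    NNReal.rpow_rpow_inv (by positivity : s ≠ 0)] at hbound
  exact (hpot.trans hbound).not_gt (by exact_mod_cast hsmall)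

lemma exists_hausdorffContent_le_lintegral (hα : 0 < α) (hs : 1 ≤ s) (hαs : α * s < n)
    (hd : n - α * s < d) :
    ∃ c : ℝ≥0, c ≠ 0 ∧ ∀ (φ : Rn n → ℝ≥0∞) (E : Set (Rn n)) (R : ℝ), 0 < R →
      (∀ x ∈ E, 1 ≤ rieszPot n α φ x) →
      ∫⁻ y, φ y ^ s ≤ c * ENNReal.ofReal (R ^ (n - α * s)) →
      hausdorffContent d E ≤
        ENNReal.ofReal (5 ^ d) * (c⁻¹ * ENNReal.ofReal (R ^ (d - (n - α * s))) *
          ∫⁻ y, φ y ^ s) := by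
  obtain ⟨c, hc, henergy⟩ := exists_closedBall_energy_ge hα hs hαs hd
  refine ⟨c, hc, fun φ E R hR hpot htotal => ?_⟩
  set K : ℝ≥0∞ := c⁻¹ * ENNReal.ofReal (R ^ (d - (n - α * s)))
  have hmass : ∀ x ∈ E, ∃ t ∈ Ioc 0 R,
      ENNReal.ofReal (t ^ d) ≤ (K • volume.withDensity (φ · ^ s)) (closedBall x t) := by
    intro x hx
    obtain ⟨t, ht, hge⟩ := henergy φ x R hR htotal (hpot x hx)
    refine ⟨t, ht, ?_⟩
    have hcancel : t ^ d = R ^ (d - (n - α * s)) * (t ^ d * R ^ (n - α * s - d)) := by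
      rw [mul_left_comm, ← Real.rpow_add hR]
      simp
    rw [Measure.smul_apply, withDensity_apply _ measurableSet_closedBall, smul_eq_mul]
    calc ENNReal.ofReal (t ^ d)
        = K * (c * ENNReal.ofReal (t ^ d * R ^ (n - α * s - d))) := by
          rw [mul_mul_mul_comm, ← ENNReal.coe_mul, inv_mul_cancel₀ hc, ENNReal.coe_one, one_mul,
            ← ENNReal.ofReal_mul (by positivity), ← hcancel]
      _ ≤ K * ∫⁻ y in closedBall x t, φ y ^ s := by gcongr
  simpa only [Measure.smul_apply, withDensity_apply _ MeasurableSet.univ, Measure.restrict_univ,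
    smul_eq_mul] using hausdorffContent_le_measure_univ hmass

lemma exists_hausdorffContent_le_lintegral_rpow (hα : 0 < α) (hs : 1 ≤ s) (hαs : α * s < n)
    (hd : n - α * s < d) :
    ∃ C : ℝ≥0, C ≠ 0 ∧ ∀ (φ : Rn n → ℝ≥0∞) (E : Set (Rn n)), (∀ x ∈ E, 1 ≤ rieszPot n α φ x) →
      hausdorffContent d E ≤ C * (∫⁻ y, φ y ^ s) ^ (d / (n - α * s)) := by
  obtain ⟨c, hc, hcontent⟩ := exists_hausdorffContent_le_lintegral hα hs hαs hd
  set m := (n : ℝ) - α * s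
  have hm : 0 < m := sub_pos.2 hαs
  have hp : 0 < d / m := div_pos (hm.trans hd) hm
  have hC : 5 ^ d * c⁻¹ ^ (d / m) ≠ 0 := by positivity
  refine ⟨5 ^ d * c⁻¹ ^ (d / m), hC, fun φ E hφ => ?_⟩
  rcases eq_or_ne (∫⁻ y, φ y ^ s) ∞ with htop | htop
  · rw [htop, ENNReal.top_rpow_of_pos hp, ENNReal.mul_top (ENNReal.coe_ne_zero.2 hC)]
    exact le_top
  obtain ⟨J, hJ⟩ : ∃ J : ℝ≥0, (J : ℝ≥0∞) = ∫⁻ y, φ y ^ s := ⟨_, ENNReal.coe_toNNReal htop⟩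
  rcases eq_or_ne J 0 with rfl | hJ0
  · have hzero := hcontent φ E 1 one_pos hφ (by simp [← hJ])
    rw [← hJ, ENNReal.coe_zero, mul_zero, mul_zero] at hzero
    exact hzero.trans bot_le
  -- The radius for which the energy of `φ` is exactly `c * R ^ m`.
  set R : ℝ≥0 := (c⁻¹ * J) ^ m⁻¹
  have hR : 0 < R := by positivity
  have hRm : R ^ m = c⁻¹ * J := NNReal.rpow_inv_rpow hm.ne' _
  have ofReal_rpow (a : ℝ≥0) (e : ℝ) : ENNReal.ofReal ((a : ℝ) ^ e) = ↑(a ^ e) := by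
    rw [← NNReal.coe_rpow, ENNReal.ofReal_coe_nnreal]
  have henergy : (J : ℝ≥0∞) = c * ENNReal.ofReal ((R : ℝ) ^ m) := by
    rw [ofReal_rpow, hRm, ← ENNReal.coe_mul, mul_inv_cancel_left₀ hc]
  have hRd : c⁻¹ * R ^ (d - m) * J = c⁻¹ ^ (d / m) * J ^ (d / m) := by
    rw [mul_right_comm, ← hRm, ← NNReal.rpow_add hR.ne', add_sub_cancel, ← NNReal.mul_rpow,
      ← NNReal.rpow_mul, inv_mul_eq_div m d]
  calc hausdorffContent d E
      ≤ ENNReal.ofReal ((5 : ℝ≥0) ^ d) *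
          (c⁻¹ * ENNReal.ofReal ((R : ℝ) ^ (d - m)) * ∫⁻ y, φ y ^ s) :=
        hcontent φ E R hR hφ (hJ.symm.trans henergy).le
    _ = ↑(5 ^ d * c⁻¹ ^ (d / m)) * (∫⁻ y, φ y ^ s) ^ (d / m) := by
        rw [← hJ, ofReal_rpow, ofReal_rpow, ← ENNReal.coe_rpow_of_nonneg _ hp.le]
        norm_cast
        rw [hRd, mul_assoc]

lemma exists_hausdorffContent_le_rpow_rieszCap (hα : 0 < α) (hs : 1 ≤ s) (hαs : α * s < n)
    (hd : n - α * s < d) :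
    ∃ C : ℝ≥0, ∀ E : Set (Rn n),
      hausdorffContent d E ≤ C * rieszCap n α s E ^ (d / (n - α * s)) := by
  obtain ⟨C, hC, hcontent⟩ := exists_hausdorffContent_le_lintegral_rpow hα hs hαs hd
  have hm : 0 < n - α * s := sub_pos.2 hαs
  exact ⟨C, fun E => le_mul_rpow_rieszCap hC (div_pos (hm.trans hd) hm) fun φ => hcontent φ E⟩

lemma rieszCap_unitBall_pos (hα : 0 < α) (hs : 1 ≤ s) (hαs : α * s < n) :
    0 < rieszCap n α s (ball 0 1) := by
  have : 0 < s := one_pos.trans_le hs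
  obtain ⟨C, hC⟩ := exists_volume_le_hausdorffContent n
  obtain ⟨C', hC'⟩ := exists_hausdorffContent_le_rpow_rieszCap (d := n) hα hs hαs
    (sub_lt_self _ (by positivity))
  refine pos_iff_ne_zero.2 fun hcap => (measure_ball_pos volume (0 : Rn n) one_pos).ne' ?_
  have hcontent := hC' (ball 0 1)
  have hexp : 0 < (n : ℝ) / (n - α * s) :=
    div_pos ((by positivity : 0 < α * s).trans hαs) (sub_pos.2 hαs)
  rw [hcap, ENNReal.zero_rpow_of_pos hexp, mul_zero, nonpos_iff_eq_zero] at hcontent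
  simpa only [hcontent, mul_zero, nonpos_iff_eq_zero] using hC (ball 0 1)

lemma exists_rieszCap_le_rpow_rieszCap {γ : ℝ} (hγ : 0 < γ) (hγα : γ < α) (hs : 1 ≤ s)
    (hαs : α * s < n) :
    ∃ C : ℝ≥0, ∀ E : Set (Rn n),
      rieszCap n γ s E ≤ C * rieszCap n α s E ^ ((n - γ * s) / (n - α * s)) := by
  have hα : 0 < α := hγ.trans hγα
  have hs0 : 0 < s := one_pos.trans_le hs
  have hαn : α < n := (le_mul_of_one_le_right hα.le hs).trans_lt hαs
  obtain ⟨C₁, hC₁⟩ := exists_rieszCap_le_hausdorffContent hγ (hγα.trans hαn) hs0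
  obtain ⟨C₂, hC₂⟩ := exists_hausdorffContent_le_rpow_rieszCap (d := n - γ * s) hα hs hαs
    (by gcongr)
  refine ⟨C₁ * C₂, fun E => (hC₁ E).trans ?_⟩
  rw [ENNReal.coe_mul, mul_assoc]
  gcongr
  exact hC₂ E

lemma choquetOn_ball_le_maximalCap (hcap : rieszCap n α s (ball 0 1) ≠ 0)
    (hcap' : rieszCap n α s (ball 0 1) ≠ ∞) (g : Rn n → ℝ≥0∞) (x : Rn n) {r : ℝ} (hr : 0 < r) :
    choquetOn (rieszCap n α s) (ball x r) g ≤
      rieszCap n α s (ball 0 1) * ENNReal.ofReal (r ^ (n - α * s)) * maximalCap n α s g x := by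
  have hscale : ENNReal.ofReal (r ^ ((n : ℝ) - α * s)) ≠ 0 :=
    (ENNReal.ofReal_pos.2 (Real.rpow_pos_of_pos hr _)).ne'
  rw [← ENNReal.inv_mul_le_iff (mul_ne_zero hcap hscale)
    (ENNReal.mul_ne_top hcap' ENNReal.ofReal_ne_top)]
  exact le_iSup₂_of_le r hr le_rfl

lemma maximalCap_le_rpow_maximalCap {γ θ : ℝ} {K : ℝ≥0} (hθ : 1 ≤ θ)
    (hexp : n - γ * s = (n - α * s) * θ)
    (hcapγ : rieszCap n γ s (ball 0 1) ≠ 0) (hcapγ' : rieszCap n γ s (ball 0 1) ≠ ∞)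
    (hcapα : rieszCap n α s (ball 0 1) ≠ 0) (hcapα' : rieszCap n α s (ball 0 1) ≠ ∞)
    (hK : ∀ E, rieszCap n γ s E ≤ K * rieszCap n α s E ^ θ) (g : Rn n → ℝ≥0∞) (x : Rn n) :
    maximalCap n γ s g x ≤
      (rieszCap n γ s (ball 0 1))⁻¹ * (K * ENNReal.ofReal θ) * rieszCap n α s (ball 0 1) ^ θ *
        maximalCap n α s (fun y => g y ^ θ⁻¹) x ^ θ := by
  set cγ := rieszCap n γ s (ball 0 1)
  set cα := rieszCap n α s (ball 0 1)
  set M := maximalCap n α s (fun y => g y ^ θ⁻¹) x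
  have hθ0 : 0 ≤ θ := zero_le_one.trans hθ
  refine iSup₂_le fun r hr => ?_
  have hscale : ENNReal.ofReal (r ^ ((n : ℝ) - γ * s)) =
      ENNReal.ofReal (r ^ ((n : ℝ) - α * s)) ^ θ := by
    rw [hexp, Real.rpow_mul hr.le, ENNReal.ofReal_rpow_of_nonneg (by positivity) hθ0]
  have hscale0 : ENNReal.ofReal (r ^ ((n : ℝ) - γ * s)) ≠ 0 :=
    (ENNReal.ofReal_pos.2 (Real.rpow_pos_of_pos hr _)).ne'
  rw [ENNReal.inv_mul_le_iff (mul_ne_zero hcapγ hscale0)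
    (ENNReal.mul_ne_top hcapγ' ENNReal.ofReal_ne_top)]
  calc choquetOn (rieszCap n γ s) (ball x r) g
      ≤ K * ENNReal.ofReal θ *
          choquetOn (rieszCap n α s) (ball x r) (fun y => g y ^ θ⁻¹) ^ θ :=
        choquetOn_le_of_le_rpow hθ (rieszCap_mono n α s) hK _ g
    _ ≤ K * ENNReal.ofReal θ * (cα * ENNReal.ofReal (r ^ ((n : ℝ) - α * s)) * M) ^ θ := by
        gcongr
        exact choquetOn_ball_le_maximalCap hcapα hcapα' _ x hr
    _ = cγ * cγ⁻¹ *
          (K * ENNReal.ofReal θ * (cα ^ θ * ENNReal.ofReal (r ^ ((n : ℝ) - γ * s)) * M ^ θ)) := by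
        rw [ENNReal.mul_inv_cancel hcapγ hcapγ', one_mul, ENNReal.mul_rpow_of_nonneg _ _ hθ0,
          ENNReal.mul_rpow_of_nonneg _ _ hθ0, hscale]
    _ = _ := by ring

end Riesz

theorem statement14_general (n : ℕ) (α γ s : ℝ) (hγ : 0 < γ) (hγα : γ < α) (hs : 1 ≤ s)
    (hαs : α * s < n) :
    ∃ C : ℝ, 0 < C ∧ ∀ (g : Rn n → ℝ≥0∞) (x : Rn n),
      maximalCap n γ s g x ≤
        ENNReal.ofReal C *
          maximalCap n α s (fun y => g y ^ (((n : ℝ) - α * s) / ((n : ℝ) - γ * s))) x ^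
            (((n : ℝ) - γ * s) / ((n : ℝ) - α * s)) := by
  have hα : 0 < α := hγ.trans hγα
  have hs0 : 0 < s := one_pos.trans_le hs
  have hαn : α < n := (le_mul_of_one_le_right hα.le hs).trans_lt hαs
  have hγsαs : γ * s < α * s := mul_lt_mul_of_pos_right hγα hs0
  have hm : 0 < (n : ℝ) - α * s := sub_pos.2 hαs
  have hcapγ := rieszCap_unitBall_pos hγ hs (hγsαs.trans hαs)
  have hcapγ' := rieszCap_unitBall_lt_top hγ (hγα.trans hαn) hs0
  have hcapα := rieszCap_unitBall_pos hα hs hαs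
  have hcapα' := rieszCap_unitBall_lt_top hα hαn hs0
  obtain ⟨K, hK⟩ := exists_rieszCap_le_rpow_rieszCap hγ hγα hs hαs
  set θ := ((n : ℝ) - γ * s) / (n - α * s) with hθ_def
  have hθ : 1 ≤ θ := (one_le_div hm).2 (by gcongr)
  have hfinite : (rieszCap n γ s (ball 0 1))⁻¹ * (K * ENNReal.ofReal θ) *
      rieszCap n α s (ball 0 1) ^ θ < ∞ :=
    ENNReal.mul_lt_top (ENNReal.mul_lt_top (ENNReal.inv_lt_top.2 hcapγ) (by finiteness))
      (ENNReal.rpow_lt_top_of_nonneg (zero_le_one.trans hθ) hcapα'.ne)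
  obtain ⟨C, -, hC, -⟩ := ENNReal.lt_iff_exists_real_btwn.1 hfinite
  refine ⟨C, ENNReal.ofReal_pos.1 (bot_le.trans_lt hC), fun g x => ?_⟩
  rw [← inv_div, ← hθ_def]
  refine (maximalCap_le_rpow_maximalCap hθ (mul_div_cancel₀ _ hm.ne').symm hcapγ.ne' hcapγ'.ne
    hcapα.ne' hcapα'.ne hK g x).trans ?_
  gcongr

/-- Pointwise comparison between capacitary maximal functions of
different orders: for `0 < γ < α < n/s`, `1 < s < n/α`,
`M_{cap_{γ,s}} f(x) ≤ C (M_{cap_{α,s}}(|f|^{(n-αs)/(n-γs)})(x))^{(n-γs)/(n-αs)}`. -/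
theorem statement14 (n : ℕ) (α γ s : ℝ) (hγ0 : 0 < γ) (hγα : γ < α)
    (hαs : α < n / s) (hs1 : 1 < s) (hsn : s < n / α) :
    ∃ C : ℝ, 0 < C ∧ ∀ (f : Rn n → ℝ) (x : Rn n),
      maximalCap n γ s (fun y => ENNReal.ofReal |f y|) x ≤
        ENNReal.ofReal C *
          (maximalCap n α s
              (fun y => ENNReal.ofReal |f y| ^ (((n : ℝ) - α * s) / ((n : ℝ) - γ * s))) x) ^
            (((n : ℝ) - γ * s) / ((n : ℝ) - α * s)) := by
  obtain ⟨C, hC, h⟩ := statement14_general n α γ s hγ0 hγα hs1.le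
    ((lt_div_iff₀ (one_pos.trans hs1)).1 hαs)
  exact ⟨C, hC, fun f => h fun y => ENNReal.ofReal |f y|⟩

end
end
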